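/- arXiv:2604.05304 — 2 statements merged into one kernel-verified Lean document; each statement's English description precedes it below -/
import Mathlib

section
/- There exists a constant N such that the following holds: let n be an M-number, let n_R be its non-tight part, let ℓ = ω(n_R), and let j = ⌊√ℓ⌋. If ℓ ≥ N and n is not divisible by q² for any non-tight prime q exceeding the j-th smallest odd prime, then n is matchable. -/
/-- A positive integer `n` is matchable if there is a bijection `ψ` from the set of
divisors of `n` to `{1, 2, ..., τ(n)}` with `gcd(d, ψ(d)) = 1` for every divisor `d`. -/
def Matchable (n : ℕ) : Prop :=
  ∃ ψ : ℕ → ℕ, Set.BijOn ψ ↑n.divisors ↑(Finset.Icc 1 n.divisors.card) ∧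
    ∀ d ∈ n.divisors, Nat.gcd d (ψ d) = 1

/-- An M-number is a positive integer not divisible by `p^p` for any prime `p`. -/
def IsMNumber (n : ℕ) : Prop := ∀ p : ℕ, p.Prime → ¬ p ^ p ∣ n

/-- The tight part `n_T` of `n`: the product of `p^{p-1}` over the tight primes of `n`,
i.e. the primes `p ∣ n` with `v_p(n) = p - 1`. -/
def tightPart (n : ℕ) : ℕ :=
  ∏ p ∈ n.primeFactors.filter (fun p => n.factorization p = p - 1), p ^ (p - 1)

/-- The non-tight part `n_R = n / n_T` of `n`. -/
def nonTightPart (n : ℕ) : ℕ := n / tightPart n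

/-- The `j`-th smallest odd prime (`j ≥ 1`), so `oddPrime 1 = 3`, `oddPrime 2 = 5`, etc. -/
noncomputable def oddPrime (j : ℕ) : ℕ :=
  Nat.nth (fun p => p.Prime ∧ p ≠ 2) (j - 1)

/-!
Modulo a tight prime `p` the value matched to `d` can be taken congruent to `v_p(d)`, which is not
`0` when `p ∣ d`. The Chinese remainder theorem therefore disposes of the tight part, and it remains
to show, for the non-tight part `R` and arbitrary residue classes `c q` modulo the primes `q ∣ R`,
that the divisors `d` of `R` can be matched to the values `i < τ(R)` so that `i ≢ c q` for all
`q ∣ d`. By Hall's theorem this holds if every set `S` of divisors and every set `W` of values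
without admissible pairs satisfy `|S| + |W| ≤ τ(R)`.

Let `m = ω(R) / 100`. Consider the density `σ a` of `S` among the divisors whose prime factors up to
`m` are `a`, and the density `β b` of `W` among the values `i` with `i ≡ c q` exactly for the primes
`q ∈ b` up to `m`. If `a` and `b` are disjoint, then a value of `W` hitting `k` of the primes above
`m` forces `σ a ≤ 1 - 2⁻ᵏ`, while `β b` is at most about `2⁻⁷⁰ᵏ` if all values of `W` over `b` hit
at least `k` of them, because the reciprocals of these primes have a tiny sum. Hence
`σ a + β b ≤ 1 + η` with a tiny error `η`. A prime `q` divides a random divisor with probability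
`v_q(R) / (v_q(R) + 1)` and hits a random value with probability about `1 / q`. These probabilities
add up to less than `1`, so the random sets `a` and `b` can be coupled to be disjoint, and averaging
gives `|S| + |W| ≤ (1 + η) τ(R)`. By the Chinese remainder theorem two values cannot both hit most
of the primes above `m`, which yields a pair `(∅, b)` at which `σ ∅ + β b` stays so far below `1`
that the error is absorbed.
-/

namespace DivisorMatching

open Finset Filter

section Coupling

variable {ι 𝕜 : Type*} [DecidableEq ι] [CommRing 𝕜] {s a : Finset ι} {x y : ι → 𝕜}

/-- The probability that a random subset of `s`, containing each `q ∈ s` independently with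
probability `x q`, equals `a`. -/
def bernoulliWeight (s : Finset ι) (x : ι → 𝕜) (a : Finset ι) : 𝕜 :=
  (∏ q ∈ a, x q) * ∏ q ∈ s \ a, (1 - x q)

/-- The probability that a random pair of disjoint subsets of `s` equals `(a, b)`, when each `q ∈ s`
independently joins the first set with probability `x q`, the second with probability `y q`, and
neither otherwise. -/
def couplingWeight (s : Finset ι) (x y : ι → 𝕜) (a b : Finset ι) : 𝕜 :=
  (∏ q ∈ a, x q) * (∏ q ∈ b, y q) * ∏ q ∈ (s \ a) \ b, (1 - x q - y q)

theorem sum_bernoulliWeight (s : Finset ι) (x : ι → 𝕜) :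
    ∑ a ∈ s.powerset, bernoulliWeight s x a = 1 := by
  simp_rw [bernoulliWeight, ← prod_add, add_sub_cancel, prod_const_one]

theorem couplingWeight_comm (s : Finset ι) (x y : ι → 𝕜) (a b : Finset ι) :
    couplingWeight s x y a b = couplingWeight s y x b a := by
  rw [couplingWeight, couplingWeight, sdiff_right_comm, mul_comm (∏ q ∈ a, x q)]
  exact congrArg _ (prod_congr rfl fun q _ => sub_right_comm _ _ _)

theorem sum_couplingWeight (s : Finset ι) (x y : ι → 𝕜) (a : Finset ι) :
    ∑ b ∈ (s \ a).powerset, couplingWeight s x y a b = bernoulliWeight s x a := by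
  simp_rw [couplingWeight, mul_assoc, ← mul_sum, ← prod_add, add_sub_cancel, bernoulliWeight]

theorem sum_powerset_sdiff_comm {M : Type*} [AddCommMonoid M] (s : Finset ι)
    (f : Finset ι → Finset ι → M) :
    ∑ a ∈ s.powerset, ∑ b ∈ (s \ a).powerset, f a b =
      ∑ b ∈ s.powerset, ∑ a ∈ (s \ b).powerset, f a b :=
  sum_comm' fun a b => by
    simp only [mem_powerset, subset_sdiff, disjoint_comm (a := a)]
    tauto

theorem sum_couplingWeight_mul_add (s : Finset ι) (x y : ι → 𝕜) (f g : Finset ι → 𝕜) :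
    ∑ a ∈ s.powerset, ∑ b ∈ (s \ a).powerset, couplingWeight s x y a b * (f a + g b) =
      ∑ a ∈ s.powerset, bernoulliWeight s x a * f a +
        ∑ b ∈ s.powerset, bernoulliWeight s y b * g b := by
  simp_rw [mul_add, sum_add_distrib]
  congr 1
  · simp_rw [← sum_mul, sum_couplingWeight]
  · rw [sum_powerset_sdiff_comm]
    simp_rw [couplingWeight_comm s x y, ← sum_mul, sum_couplingWeight]

variable [LinearOrder 𝕜] [IsStrictOrderedRing 𝕜]

theorem bernoulliWeight_pos (hx : ∀ q ∈ s, 0 < x q) (hx1 : ∀ q ∈ s, x q < 1) (ha : a ⊆ s) :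
    0 < bernoulliWeight s x a :=
  mul_pos (prod_pos fun q hq => hx q (ha hq))
    (prod_pos fun q hq => sub_pos.2 (hx1 q (sdiff_subset hq)))

theorem couplingWeight_nonneg (hx : ∀ q ∈ s, 0 ≤ x q) (hy : ∀ q ∈ s, 0 ≤ y q)
    (hxy : ∀ q ∈ s, x q + y q ≤ 1) {b : Finset ι} (ha : a ⊆ s) (hb : b ⊆ s) :
    0 ≤ couplingWeight s x y a b :=
  mul_nonneg
    (mul_nonneg (prod_nonneg fun q hq => hx q (ha hq)) (prod_nonneg fun q hq => hy q (hb hq)))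
    (prod_nonneg fun q hq => by linarith [hxy q (sdiff_subset (sdiff_subset hq))])

theorem sum_bernoulliWeight_mul_add_le (hx : ∀ q ∈ s, 0 ≤ x q) (hy : ∀ q ∈ s, 0 ≤ y q)
    (hxy : ∀ q ∈ s, x q + y q ≤ 1) {σ β : Finset ι → 𝕜} {η γ : 𝕜} {b₀ : Finset ι} (hb₀ : b₀ ⊆ s)
    (hpair : ∀ a ⊆ s, ∀ b ⊆ s \ a, σ a + β b ≤ 1 + η) (hgap : σ ∅ + β b₀ ≤ 1 - γ) :
    ∑ a ∈ s.powerset, bernoulliWeight s x a * σ a +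
        ∑ b ∈ s.powerset, bernoulliWeight s y b * β b ≤
      1 + η - couplingWeight s x y ∅ b₀ * (γ + η) := by
  have weight_nonneg : ∀ a ∈ s.powerset, ∀ b ∈ (s \ a).powerset, 0 ≤ couplingWeight s x y a b :=
    fun a ha b hb => couplingWeight_nonneg hx hy hxy (mem_powerset.1 ha)
      ((mem_powerset.1 hb).trans sdiff_subset)
  have term_nonneg : ∀ a ∈ s.powerset, ∀ b ∈ (s \ a).powerset,
      0 ≤ couplingWeight s x y a b * ((1 + η - σ a) + -β b) := fun a ha b hb =>
    mul_nonneg (weight_nonneg a ha b hb)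
      (by linarith [hpair a (mem_powerset.1 ha) b (mem_powerset.1 hb)])
  have hmem : b₀ ∈ (s \ ∅).powerset := by simpa using hb₀
  have key : couplingWeight s x y ∅ b₀ * (γ + η) ≤
      ∑ a ∈ s.powerset, bernoulliWeight s x a * (1 + η - σ a) +
        ∑ b ∈ s.powerset, bernoulliWeight s y b * -β b := calc
    _ ≤ couplingWeight s x y ∅ b₀ * ((1 + η - σ ∅) + -β b₀) :=
      mul_le_mul_of_nonneg_left (by linarith) (weight_nonneg ∅ (empty_mem_powerset s) b₀ hmem)
    _ ≤ ∑ b ∈ (s \ ∅).powerset, couplingWeight s x y ∅ b * ((1 + η - σ ∅) + -β b) :=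
      single_le_sum (f := fun b => couplingWeight s x y ∅ b * ((1 + η - σ ∅) + -β b))
        (term_nonneg ∅ (empty_mem_powerset s)) hmem
    _ ≤ ∑ a ∈ s.powerset, ∑ b ∈ (s \ a).powerset,
          couplingWeight s x y a b * ((1 + η - σ a) + -β b) :=
      single_le_sum (f := fun a => ∑ b ∈ (s \ a).powerset,
          couplingWeight s x y a b * ((1 + η - σ a) + -β b))
        (fun a ha => sum_nonneg (term_nonneg a ha)) (empty_mem_powerset s)
    _ = _ := sum_couplingWeight_mul_add s x y (1 + η - σ ·) (-β ·)
  simp only [mul_sub, mul_neg, sum_sub_distrib, sum_neg_distrib, ← sum_mul, sum_bernoulliWeight,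
    one_mul] at key
  linarith

end Coupling

section Inequalities

theorem sum_powersetCard_prod_le_pow {ι 𝕜 : Type*} [CommSemiring 𝕜] [PartialOrder 𝕜]
    [IsOrderedRing 𝕜] {r : ι → 𝕜} {L : Finset ι} (hr : ∀ q ∈ L, 0 ≤ r q) (k : ℕ) :
    ∑ T ∈ L.powersetCard k, ∏ q ∈ T, r q ≤ (∑ q ∈ L, r q) ^ k := by
  classical
  induction L using Finset.induction_on generalizing k with
  | empty =>
    rcases k with - | k
    · simp
    · simp [powersetCard_eq_empty.2 (card_empty.trans_lt k.succ_pos)]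
  | insert p L hp ih =>
    rcases k with - | k
    · simp
    have hrp : 0 ≤ r p := hr p (mem_insert_self p L)
    have hrL : ∀ q ∈ L, 0 ≤ r q := fun q hq => hr q (mem_insert_of_mem hq)
    have notMem_of_mem : ∀ T ∈ L.powersetCard k, p ∉ T := fun T hT hpT =>
      hp ((mem_powersetCard.1 hT).1 hpT)
    have hdisj : Disjoint (L.powersetCard (k + 1)) ((L.powersetCard k).image (insert p)) := by
      refine disjoint_left.2 fun T hT hT' => ?_
      obtain ⟨U, -, rfl⟩ := mem_image.1 hT'
      exact hp ((mem_powersetCard.1 hT).1 (mem_insert_self p U))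
    have hinj : Set.InjOn (insert p) (L.powersetCard k : Set (Finset ι)) := fun T hT U hU hTU => by
      rw [← erase_insert (notMem_of_mem T hT), hTU, erase_insert (notMem_of_mem U hU)]
    rw [powersetCard_succ_insert hp, sum_union hdisj, sum_image hinj, sum_insert hp]
    calc _ = ∑ T ∈ L.powersetCard (k + 1), ∏ q ∈ T, r q +
          r p * ∑ T ∈ L.powersetCard k, ∏ q ∈ T, r q := by
          rw [mul_sum]
          exact congrArg _ (sum_congr rfl fun T hT => prod_insert (notMem_of_mem T hT))
      _ ≤ (∑ q ∈ L, r q) ^ (k + 1) + r p * (∑ q ∈ L, r q) ^ k := by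
          gcongr
          exacts [ih hrL (k + 1), ih hrL k]
      _ = (r p + ∑ q ∈ L, r q) * (∑ q ∈ L, r q) ^ k := by ring
      _ ≤ (r p + ∑ q ∈ L, r q) * (r p + ∑ q ∈ L, r q) ^ k := by
          have := sum_nonneg hrL
          gcongr
          exact le_add_of_nonneg_left hrp
      _ = _ := (pow_succ' _ _).symm

theorem choose_mul_pow_le_one_add_pow {x : ℝ} (hx : 0 ≤ x) (n k : ℕ) :
    n.choose k * x ^ k ≤ (1 + x) ^ n := by
  rcases lt_or_ge n k with hnk | hkn
  · rw [Nat.choose_eq_zero_of_lt hnk, Nat.cast_zero, zero_mul]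
    positivity
  · rw [add_comm, add_pow]
    refine le_trans (le_of_eq ?_) (single_le_sum (f := fun i => x ^ i * 1 ^ (n - i) * n.choose i)
      (fun i _ => by positivity) (mem_range.2 (Nat.lt_succ_of_le hkn)))
    ring

end Inequalities

section Residues

theorem modEq_prod {u : Finset ℕ} (hu : (u : Set ℕ).Pairwise Nat.Coprime) {i j : ℕ}
    (h : ∀ q ∈ u, i ≡ j [MOD q]) : i ≡ j [MOD ∏ q ∈ u, q] := by
  rw [Nat.modEq_iff_dvd, Nat.cast_prod]
  exact prod_dvd_of_coprime (fun p hp q hq hpq => (hu hp hq hpq).isCoprime)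
    fun q hq => (h q hq).dvd

theorem card_filter_forall_mod_mem_le {u : Finset ℕ} (hu : (u : Set ℕ).Pairwise Nat.Coprime)
    (hpos : ∀ q ∈ u, 0 < q) (box : ℕ → Finset ℕ) (M : ℕ) :
    #{i ∈ range M | ∀ q ∈ u, i % q ∈ box q} ≤ (M / ∏ q ∈ u, q + 1) * ∏ q ∈ u, #(box q) := by
  rw [← card_pi]
  refine card_le_mul_card_image_of_maps_to (f := fun i q _ => i % q) (fun i hi => ?_) _ ?_
  · exact mem_pi.2 (mem_filter.1 hi).2
  intro r _
  rcases (filter (fun i => (fun q _ => i % q) = r)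
    {i ∈ range M | ∀ q ∈ u, i % q ∈ box q}).eq_empty_or_nonempty with hempty | ⟨j, hj⟩
  · simp [hempty]
  have fiber_subset : filter (fun i => (fun q _ => i % q) = r)
      {i ∈ range M | ∀ q ∈ u, i % q ∈ box q} ⊆ {i ∈ range M | i ≡ j [MOD ∏ q ∈ u, q]} := by
    intro i hi
    refine mem_filter.2 ⟨(mem_filter.1 (mem_filter.1 hi).1).1, modEq_prod hu fun q hq => ?_⟩
    exact congrFun₂ ((mem_filter.1 hi).2.trans (mem_filter.1 hj).2.symm) q hq
  refine (card_le_card fiber_subset).trans ?_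
  rw [← Nat.count_eq_card_filter_range, Nat.count_modEq_card M (prod_pos hpos)]
  split_ifs <;> omega

/-- The elements `q` of `T` whose prescribed residue class `c q` modulo `q` contains `i`. -/
def hits (c : ℕ → ℕ) (T : Finset ℕ) (i : ℕ) : Finset ℕ := {q ∈ T | i ≡ c q [MOD q]}

variable {c : ℕ → ℕ} {s L T b u G : Finset ℕ} {i j q k M : ℕ}

theorem mem_hits : q ∈ hits c T i ↔ q ∈ T ∧ i ≡ c q [MOD q] := mem_filter

theorem hits_subset (c : ℕ → ℕ) (T : Finset ℕ) (i : ℕ) : hits c T i ⊆ T := filter_subset _ _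

theorem hits_union (c : ℕ → ℕ) (s T : Finset ℕ) (i : ℕ) :
    hits c (s ∪ T) i = hits c s i ∪ hits c T i := filter_union ..

theorem pairwise_coprime_of_prime (hu : ∀ q ∈ u, q.Prime) : (u : Set ℕ).Pairwise Nat.Coprime :=
  fun p hp q hq hpq => (Nat.coprime_primes (hu p hp) (hu q hq)).2 hpq

theorem card_filter_hits_eq_le (hu : ∀ q ∈ u, q.Prime) (hb : b ⊆ u) (c : ℕ → ℕ) (M : ℕ) :
    #{i ∈ range M | hits c u i = b} ≤ (M / ∏ q ∈ u, q + 1) * ∏ q ∈ u \ b, (q - 1) := by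
  let box q := if q ∈ b then {c q % q} else (range q).erase (c q % q)
  have card_box : ∏ q ∈ u, #(box q) = ∏ q ∈ u \ b, (q - 1) := by
    rw [← prod_sdiff hb, prod_eq_one (s := b) fun q hq => by simp [box, hq], mul_one]
    refine prod_congr rfl fun q hq => ?_
    obtain ⟨hqu, hqb⟩ := mem_sdiff.1 hq
    simp [box, hqb, Nat.mod_lt _ (hu q hqu).pos]
  rw [← card_box]
  refine le_trans (card_le_card fun i hi => ?_) (card_filter_forall_mod_mem_le
    (pairwise_coprime_of_prime hu) (fun q hq => (hu q hq).pos) box M)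
  obtain ⟨hiM, rfl⟩ := mem_filter.1 hi
  refine mem_filter.2 ⟨hiM, fun q hq => ?_⟩
  by_cases hiq : q ∈ hits c u i
  · rw [show box q = {c q % q} from if_pos hiq]
    exact mem_singleton.2 (mem_hits.1 hiq).2
  · simp only [box, hiq, if_false, mem_erase, mem_range]
    exact ⟨fun h => hiq (mem_hits.2 ⟨hq, h⟩), Nat.mod_lt _ (hu q hq).pos⟩

theorem bernoulliWeight_inv_eq (hs : ∀ q ∈ s, q.Prime) (hb : b ⊆ s) :
    bernoulliWeight s (fun q : ℕ => (q : ℝ)⁻¹) b =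
      (∏ q ∈ s \ b, (q - 1) : ℕ) / (∏ q ∈ s, q : ℕ) := by
  rw [bernoulliWeight, ← prod_sdiff hb (f := fun q : ℕ => q)]
  push_cast
  rw [mul_comm (∏ q ∈ s \ b, (q : ℝ)), div_mul_eq_div_div_swap, ← prod_div_distrib, mul_comm,
    prod_inv_distrib, ← div_eq_mul_inv]
  congr 1
  refine prod_congr rfl fun q hq => ?_
  have hq := (hs q (sdiff_subset hq)).pos
  rw [Nat.cast_sub hq, sub_div, div_self (by positivity), Nat.cast_one, one_div]

theorem card_filter_hits_eq_union_le (hs : ∀ q ∈ s, q.Prime) (hT : ∀ q ∈ T, q.Prime)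
    (hsT : Disjoint s T) (hb : b ⊆ s) (c : ℕ → ℕ) (hM : M ≠ 0) :
    (#{i ∈ range M | hits c (s ∪ T) i = b ∪ T} : ℝ) ≤
      M * bernoulliWeight s (fun q : ℕ => (q : ℝ)⁻¹) b *
        (∏ q ∈ T, (q : ℝ)⁻¹ + (∏ q ∈ s, q : ℕ) / M) := by
  have hu : ∀ q ∈ s ∪ T, q.Prime := fun q hq => (mem_union.1 hq).elim (hs q) (hT q)
  have hdiff : (s ∪ T) \ (b ∪ T) = s \ b := by
    grind [disjoint_left]
  have hclass := card_filter_hits_eq_le hu (union_subset_union_left hb) c M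
  rw [hdiff, prod_union hsT] at hclass
  have hQ : (∏ q ∈ s, (q : ℝ)) ≠ 0 := prod_ne_zero_iff.2 fun q hq => mod_cast (hs q hq).ne_zero
  calc (#{i ∈ range M | hits c (s ∪ T) i = b ∪ T} : ℝ)
      ≤ (M / ((∏ q ∈ s, q) * ∏ q ∈ T, q) + 1 : ℕ) * (∏ q ∈ s \ b, (q - 1) : ℕ) :=
        mod_cast hclass
    _ ≤ (M / ((∏ q ∈ s, q) * ∏ q ∈ T, q : ℕ) + 1) * (∏ q ∈ s \ b, (q - 1) : ℕ) := by
        rw [Nat.cast_succ]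
        gcongr
        exact Nat.cast_div_le
    _ = _ := by
        rw [bernoulliWeight_inv_eq hs hb, prod_inv_distrib]
        push_cast
        field_simp

/-- The main term is the expected size for independent uniform residues; the error term counts the
residue classes that are covered. -/
theorem card_le_of_forall_le_card_hits (hs : ∀ q ∈ s, q.Prime) (hL : ∀ q ∈ L, q.Prime)
    (hsL : Disjoint s L) (hb : b ⊆ s) (hM : M ≠ 0) (hG : G ⊆ range M)
    (hGb : ∀ i ∈ G, hits c s i = b) (hGk : ∀ i ∈ G, k ≤ #(hits c L i)) :
    (#G : ℝ) ≤ M * bernoulliWeight s (fun q : ℕ => (q : ℝ)⁻¹) b *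
      (∑ T ∈ L.powersetCard k, ∏ q ∈ T, (q : ℝ)⁻¹ +
        (#L).choose k * ((∏ q ∈ s, q : ℕ) / M)) := by
  have hcover : G ⊆ (L.powersetCard k).biUnion fun T =>
      {i ∈ range M | hits c (s ∪ T) i = b ∪ T} := by
    intro i hi
    obtain ⟨T, hT, hTk⟩ := exists_subset_card_eq (hGk i hi)
    refine mem_biUnion.2 ⟨T, mem_powersetCard.2 ⟨hT.trans (hits_subset _ _ _), hTk⟩, ?_⟩
    refine mem_filter.2 ⟨hG hi, ?_⟩
    rw [hits_union, hGb i hi, hits, filter_true_of_mem fun q hq => (mem_hits.1 (hT hq)).2]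
  calc (#G : ℝ) ≤ ∑ T ∈ L.powersetCard k,
        (#{i ∈ range M | hits c (s ∪ T) i = b ∪ T} : ℝ) := by
        exact_mod_cast (card_le_card hcover).trans card_biUnion_le
    _ ≤ ∑ T ∈ L.powersetCard k, M * bernoulliWeight s (fun q : ℕ => (q : ℝ)⁻¹) b *
          (∏ q ∈ T, (q : ℝ)⁻¹ + (∏ q ∈ s, q : ℕ) / M) := sum_le_sum fun T hT =>
        have hTL := (mem_powersetCard.1 hT).1
        card_filter_hits_eq_union_le hs (fun q hq => hL q (hTL hq))
          (disjoint_of_subset_right hTL hsL) hb c hM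
    _ = _ := by
        rw [← mul_sum, sum_add_distrib, sum_const, card_powersetCard, nsmul_eq_mul]

end Residues

section Divisors

variable {R : ℕ} {A B s a : Finset ℕ}

theorem card_filter_divisors_forall_factorization_mem (hR : R ≠ 0) {box : ℕ → Finset ℕ}
    (hbox : ∀ q ∈ R.primeFactors, ∀ k ∈ box q, k ≤ R.factorization q) :
    #{d ∈ R.divisors | ∀ q ∈ R.primeFactors, d.factorization q ∈ box q} =
      ∏ q ∈ R.primeFactors, #(box q) := by
  rw [← card_finsupp]
  refine card_nbij Nat.factorization (fun d hd => ?_) (fun d hd d' hd' h => ?_) fun f hf => ?_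
  · rw [mem_coe, mem_filter, Nat.mem_divisors] at hd
    exact mem_finsupp_iff.2 ⟨Nat.primeFactors_mono hd.1.1 hR, hd.2⟩
  · rw [mem_coe, mem_filter] at hd hd'
    exact Nat.eq_of_factorization_eq (Nat.pos_of_mem_divisors hd.1).ne'
      (Nat.pos_of_mem_divisors hd'.1).ne' fun q => DFunLike.congr_fun h q
  · obtain ⟨hsupp, hmem⟩ := mem_finsupp_iff.1 hf
    have hprime : ∀ q ∈ f.support, q.Prime := fun q hq => Nat.prime_of_mem_primeFactors (hsupp hq)
    have hfact := Nat.prod_pow_factorization_eq_self hprime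
    refine ⟨f.prod (· ^ ·), ?_, hfact⟩
    have hprod : f.prod (· ^ ·) ≠ 0 :=
      prod_ne_zero_iff.2 fun q hq => pow_ne_zero _ (hprime q hq).ne_zero
    rw [mem_coe, mem_filter, Nat.mem_divisors, ← Nat.factorization_le_iff_dvd hprod hR, hfact]
    refine ⟨⟨fun q => ?_, hR⟩, hmem⟩
    by_cases hq : q ∈ R.primeFactors
    · exact hbox q hq _ (hmem q hq)
    · simp [Finsupp.notMem_support_iff.1 fun h => hq (hsupp h)]

theorem card_filter_subset_primeFactors_disjoint (hR : R ≠ 0) (hA : A ⊆ R.primeFactors)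
    (hB : B ⊆ R.primeFactors) (hAB : Disjoint A B) :
    #{d ∈ R.divisors | A ⊆ d.primeFactors ∧ Disjoint d.primeFactors B} =
      (∏ q ∈ A, R.factorization q) * ∏ q ∈ (R.primeFactors \ A) \ B, (R.factorization q + 1) := by
  let box q := {k ∈ range (R.factorization q + 1) | (q ∈ A → k ≠ 0) ∧ (q ∈ B → k = 0)}
  have card_box : ∏ q ∈ R.primeFactors, #(box q) =
      (∏ q ∈ A, R.factorization q) * ∏ q ∈ (R.primeFactors \ A) \ B, (R.factorization q + 1) := by
    have hBA : B ⊆ R.primeFactors \ A := subset_sdiff.2 ⟨hB, hAB.symm⟩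
    have box_A : ∀ q ∈ A, #(box q) = R.factorization q := fun q hq => by
      simp [box, hq, disjoint_left.1 hAB hq, filter_ne']
    have box_B : ∀ q ∈ B, #(box q) = 1 := fun q hq => by
      simp [box, hq, disjoint_right.1 hAB hq, filter_eq']
    have box_rest : ∀ q ∈ (R.primeFactors \ A) \ B, #(box q) = R.factorization q + 1 :=
      fun q hq => by
        obtain ⟨hqA, hqB⟩ := mem_sdiff.1 hq
        simp [box, hqB, (mem_sdiff.1 hqA).2]
    rw [← prod_sdiff hA, ← prod_sdiff hBA, mul_comm, prod_congr rfl box_A, prod_eq_one box_B,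
      mul_one, prod_congr rfl box_rest]
  rw [← card_box, ← card_filter_divisors_forall_factorization_mem hR fun q _ k hk =>
    Nat.lt_succ_iff.1 (mem_range.1 (mem_filter.1 hk).1)]
  refine congrArg card (filter_congr fun d hd => ?_)
  have hle : d.factorization ≤ R.factorization :=
    (Nat.factorization_le_iff_dvd (Nat.pos_of_mem_divisors hd).ne' hR).2
      (Nat.dvd_of_mem_divisors hd)
  simp only [subset_iff, disjoint_right, ← Nat.support_factorization, Finsupp.mem_support_iff,
    not_not, mem_filter, mem_range, Nat.lt_succ_iff]
  exact ⟨fun h q _ => ⟨hle q, @h.1 q, @h.2 q⟩, fun h =>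
    ⟨fun q hq => (h q (Finsupp.mem_support_iff.1 (hA hq))).2.1 hq,
      fun q hq => (h q (Finsupp.mem_support_iff.1 (hB hq))).2.2 hq⟩⟩

/-- The probability that a uniformly random divisor of `R` is divisible by the prime `q`. -/
noncomputable def occurrenceProb (R q : ℕ) : ℝ := R.factorization q / (R.factorization q + 1)

theorem one_sub_occurrenceProb (R q : ℕ) :
    1 - occurrenceProb R q = (R.factorization q + 1 : ℝ)⁻¹ := by
  rw [occurrenceProb]
  field_simp
  ring

theorem bernoulliWeight_occurrenceProb_eq (R : ℕ) (ha : a ⊆ s) :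
    bernoulliWeight s (occurrenceProb R) a =
      (∏ q ∈ a, R.factorization q : ℕ) / (∏ q ∈ s, (R.factorization q + 1) : ℕ) := by
  simp_rw [bernoulliWeight, one_sub_occurrenceProb, occurrenceProb]
  rw [prod_div_distrib, prod_inv_distrib, ← div_eq_mul_inv, div_div, mul_comm, prod_sdiff ha]
  push_cast
  rfl

theorem card_filter_inter_primeFactors_eq (hR : R ≠ 0) (hs : s ⊆ R.primeFactors) (ha : a ⊆ s)
    (hB : B ⊆ R.primeFactors \ s) (hB1 : ∀ q ∈ B, R.factorization q = 1) :
    (#{d ∈ R.divisors | d.primeFactors ∩ s = a ∧ Disjoint d.primeFactors B} : ℝ) =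
      #R.divisors * bernoulliWeight s (occurrenceProb R) a * (1 / 2) ^ #B := by
  have hfilter : {d ∈ R.divisors | d.primeFactors ∩ s = a ∧ Disjoint d.primeFactors B} =
      {d ∈ R.divisors | a ⊆ d.primeFactors ∧ Disjoint d.primeFactors ((s \ a) ∪ B)} := by
    refine filter_congr fun d _ => ?_
    rw [disjoint_union_right, ← and_assoc]
    exact and_congr_left fun _ => by grind [disjoint_left]
  have hsB : Disjoint s B := (subset_sdiff.1 hB).2.symm
  have hrest : (R.primeFactors \ a) \ ((s \ a) ∪ B) = (R.primeFactors \ s) \ B := by grind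
  rw [hfilter, card_filter_subset_primeFactors_disjoint hR (ha.trans hs)
    (union_subset (sdiff_subset.trans hs) (hB.trans sdiff_subset)) (by grind [disjoint_left]),
    hrest, bernoulliWeight_occurrenceProb_eq R ha, Nat.card_divisors hR, ← prod_sdiff hs,
    ← prod_sdiff hB, prod_congr rfl fun q hq => congrArg (· + 1) (hB1 q hq), prod_const]
  have hne : ∏ q ∈ s, (R.factorization q + 1 : ℝ) ≠ 0 := (prod_pos fun q _ => by positivity).ne'
  push_cast
  field_simp
  rw [mul_assoc, ← mul_pow]
  norm_num

end Divisors

section Matching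

theorem exists_bijOn_of_card_add_card_le {α β : Type*} [Nonempty β] {X : Finset α} {Y : Finset β}
    (hXY : #X = #Y) (r : α → β → Prop)
    (h : ∀ S ⊆ X, ∀ W ⊆ Y, (∀ x ∈ S, ∀ y ∈ W, ¬ r x y) → #S + #W ≤ #X) :
    ∃ f : α → β, Set.BijOn f X Y ∧ ∀ x ∈ X, r x (f x) := by
  classical
  obtain ⟨g, hg_inj, hg⟩ := (all_card_le_biUnion_card_iff_exists_injective
    fun x : X => {y ∈ Y | r x y}).1 fun S => by
      have hN : S.biUnion (fun x : X => {y ∈ Y | r x y}) ⊆ Y :=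
        biUnion_subset.2 fun x _ => filter_subset _ _
      have := h (S.map (Function.Embedding.subtype _)) (map_subtype_subset S)
        (Y \ S.biUnion fun x : X => {y ∈ Y | r x y}) sdiff_subset fun x hx y hy hxy => by
          obtain ⟨z, hz, rfl⟩ := mem_map.1 hx
          obtain ⟨hyY, hyN⟩ := mem_sdiff.1 hy
          exact hyN (mem_biUnion.2 ⟨z, hz, mem_filter.2 ⟨hyY, hxy⟩⟩)
      rw [card_map, card_sdiff_of_subset hN] at this
      have := card_le_card hN
      omega
  let f := Function.extend Subtype.val g fun _ => Classical.arbitrary β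
  have hf : ∀ x (hx : x ∈ X), f x = g ⟨x, hx⟩ := fun x hx =>
    Subtype.val_injective.extend_apply g _ ⟨x, hx⟩
  have hmem : ∀ x ∈ X, f x ∈ Y ∧ r x (f x) := fun x hx =>
    hf x hx ▸ mem_filter.1 (hg ⟨x, hx⟩)
  have hinj : Set.InjOn f X := fun x hx y hy hxy => by
    rw [hf x hx, hf y hy] at hxy
    exact congrArg Subtype.val (hg_inj hxy)
  have hmaps : Set.MapsTo f X Y := fun x hx => (hmem x hx).1
  exact ⟨f, ⟨hmaps, hinj, surjOn_of_injOn_of_card_le f hmaps hinj hXY.ge⟩,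
    fun x hx => (hmem x hx).2⟩

theorem sum_mul_card_fiber_div {α κ 𝕜 : Type*} [DecidableEq κ] [Field 𝕜] {S : Finset α}
    {t : Finset κ} {f : α → κ} (hf : Set.MapsTo f S t) {w : κ → 𝕜} (hw : ∀ a ∈ t, w a ≠ 0) (M : 𝕜) :
    ∑ a ∈ t, w a * (#{x ∈ S | f x = a} / (M * w a)) = #S / M := by
  rw [card_eq_sum_card_fiberwise hf, Nat.cast_sum, sum_div]
  refine sum_congr rfl fun a ha => ?_
  have := hw a ha
  rw [mul_div_assoc', mul_comm M, mul_div_mul_left _ _ this]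

end Matching

section WellSplit

/-- The prime factors of `R` that are at most `m`. -/
def smallPrimes (R m : ℕ) : Finset ℕ := {q ∈ R.primeFactors | q ≤ m}

/-- The prime factors of `R` that exceed `m`. -/
def largePrimes (R m : ℕ) : Finset ℕ := {q ∈ R.primeFactors | m < q}

variable {R m q k i j : ℕ} {c : ℕ → ℕ} {a b S W : Finset ℕ}

theorem smallPrimes_subset (R m : ℕ) : smallPrimes R m ⊆ R.primeFactors := filter_subset _ _

theorem largePrimes_subset (R m : ℕ) : largePrimes R m ⊆ R.primeFactors := filter_subset _ _

theorem prime_of_mem_smallPrimes (hq : q ∈ smallPrimes R m) : q.Prime :=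
  Nat.prime_of_mem_primeFactors (smallPrimes_subset R m hq)

theorem prime_of_mem_largePrimes (hq : q ∈ largePrimes R m) : q.Prime :=
  Nat.prime_of_mem_primeFactors (largePrimes_subset R m hq)

theorem primeFactors_sdiff_smallPrimes (R m : ℕ) :
    R.primeFactors \ smallPrimes R m = largePrimes R m := by
  simp_rw [smallPrimes, largePrimes, ← filter_not, not_le]

theorem disjoint_smallPrimes_largePrimes (R m : ℕ) :
    Disjoint (smallPrimes R m) (largePrimes R m) :=
  primeFactors_sdiff_smallPrimes R m ▸ disjoint_sdiff

theorem smallPrimes_union_largePrimes (R m : ℕ) :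
    smallPrimes R m ∪ largePrimes R m = R.primeFactors :=
  primeFactors_sdiff_smallPrimes R m ▸ union_sdiff_of_subset (smallPrimes_subset R m)

theorem prod_smallPrimes_le (R m : ℕ) : ∏ q ∈ smallPrimes R m, q ≤ 2 ^ (2 * m) := by
  rw [pow_mul]
  refine le_trans (prod_le_prod_of_subset_of_one_le' (fun q hq => ?_) fun q hq _ => ?_)
    (primorial_le_four_pow m)
  · exact mem_filter.2
      ⟨mem_range_succ_iff.2 (mem_filter.1 hq).2, prime_of_mem_smallPrimes hq⟩
  · exact (mem_filter.1 hq).2.one_le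

/-- The relative error in the density estimates for residue classes. -/
noncomputable def densityError (m : ℕ) : ℝ := 2 ^ 26 * (1 / 2) ^ (70 * m)

/-- The hypotheses on the non-tight part `R` under which its divisors are matched: the primes
dividing `R` exactly once and exceeding a hundredth `m` of `ω(R)` form the bulk of its primes, and
their reciprocals have a tiny sum. -/
structure WellSplit (R m : ℕ) : Prop where
  ne_zero : R ≠ 0
  two_pow_le : 2 ^ 100 ≤ m
  card_div : #R.primeFactors / 100 = m
  factorization_add_two_le : ∀ q ∈ R.primeFactors, R.factorization q + 2 ≤ q
  factorization_eq_one : ∀ q ∈ largePrimes R m, R.factorization q = 1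
  sum_inv_le : ∑ q ∈ largePrimes R m, (q : ℝ)⁻¹ ≤ (1 / 2) ^ 70

namespace WellSplit

variable (h : WellSplit R m)

include h

theorem card_divisors_pos : 0 < #R.divisors := card_pos.2 (Nat.nonempty_divisors.2 h.ne_zero)

theorem two_pow_le_card_divisors : 2 ^ (100 * m) ≤ #R.divisors := by
  rw [Nat.card_divisors h.ne_zero]
  calc 2 ^ (100 * m) ≤ 2 ^ #R.primeFactors := by
        have := h.card_div
        gcongr <;> omega
    _ ≤ _ := pow_card_le_prod _ _ _ fun q hq => Nat.succ_le_succ <|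
        (Nat.prime_of_mem_primeFactors hq).factorization_pos_of_dvd h.ne_zero
          (Nat.dvd_of_mem_primeFactors hq)

theorem card_largePrimes_lt : #(largePrimes R m) < 100 * m + 100 := by
  have := card_le_card (largePrimes_subset R m)
  have := h.card_div
  omega

theorem card_divisors_le : #R.divisors ≤ 2 ^ (103 * m) := by
  have hm := h.two_pow_le
  have hL := h.card_largePrimes_lt
  calc #R.divisors = (∏ q ∈ smallPrimes R m, (R.factorization q + 1)) *
        ∏ q ∈ largePrimes R m, (R.factorization q + 1) := by
        rw [Nat.card_divisors h.ne_zero, ← smallPrimes_union_largePrimes R m,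
          prod_union (disjoint_smallPrimes_largePrimes R m)]
    _ ≤ (∏ q ∈ smallPrimes R m, q) * 2 ^ #(largePrimes R m) := by
        gcongr with q hq
        · have := h.factorization_add_two_le q (smallPrimes_subset R m hq)
          omega
        · exact prod_le_pow_card _ _ _ fun q hq => by rw [h.factorization_eq_one q hq]
    _ ≤ 2 ^ (2 * m) * 2 ^ (101 * m) := by
        gcongr
        · exact prod_smallPrimes_le R m
        · norm_num
        · omega
    _ = 2 ^ (103 * m) := by rw [← pow_add]; ring_nf

theorem choose_card_largePrimes_le (hk : k ≤ m) :
    (#(largePrimes R m)).choose k ≤ 2 ^ (28 * m + 25) := by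
  have hL := h.card_largePrimes_lt
  have hchoose := choose_mul_pow_le_one_add_pow (x := 1 / 8) (by norm_num) #(largePrimes R m) k
  rw [one_div_pow, mul_one_div, div_le_iff₀ (by positivity)] at hchoose
  suffices ((#(largePrimes R m)).choose k : ℝ) ≤ 2 ^ (28 * m + 25) by exact_mod_cast this
  calc ((#(largePrimes R m)).choose k : ℝ) ≤ (1 + 1 / 8) ^ #(largePrimes R m) * 8 ^ k := hchoose
    _ ≤ (1 + 1 / 8) ^ (4 * (25 * m + 25)) * 8 ^ m := by
        gcongr <;> first | omega | norm_num
    _ = ((1 + 1 / 8) ^ 4) ^ (25 * m + 25) * (2 ^ 3) ^ m := by rw [← pow_mul]; norm_num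
    _ ≤ 2 ^ (25 * m + 25) * (2 ^ 3) ^ m := by gcongr; norm_num
    _ = _ := by rw [← pow_mul, ← pow_add]; ring_nf

end WellSplit

theorem densityError_pos (m : ℕ) : 0 < densityError m := by
  unfold densityError
  positivity

theorem densityError_le {n : ℕ} (h : n + 26 ≤ 70 * m) : densityError m ≤ (1 / 2) ^ n := calc
  densityError m ≤ 2 ^ 26 * (1 / 2) ^ (26 + n) := by
    unfold densityError
    gcongr ?_ * ?_
    exact pow_le_pow_of_le_one (by norm_num) (by norm_num) (by omega)
  _ = (1 / 2) ^ n := by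
    rw [pow_add, ← mul_assoc, ← mul_pow]
    norm_num

theorem occurrenceProb_lt_one (R q : ℕ) : occurrenceProb R q < 1 := by
  rw [← sub_pos, one_sub_occurrenceProb]
  positivity

theorem occurrenceProb_pos (hq : q ∈ R.primeFactors) : 0 < occurrenceProb R q := by
  have := Nat.pos_of_ne_zero
    (Finsupp.mem_support_iff.1 (R.support_factorization.symm ▸ hq))
  unfold occurrenceProb
  positivity

theorem bernoulliWeight_occurrenceProb_pos (ha : a ⊆ smallPrimes R m) :
    0 < bernoulliWeight (smallPrimes R m) (occurrenceProb R) a :=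
  bernoulliWeight_pos (fun _ hq => occurrenceProb_pos (smallPrimes_subset R m hq))
    (fun q _ => occurrenceProb_lt_one R q) ha

theorem bernoulliWeight_inv_pos (ha : a ⊆ smallPrimes R m) :
    0 < bernoulliWeight (smallPrimes R m) (fun q : ℕ => (q : ℝ)⁻¹) a :=
  bernoulliWeight_pos (fun _ hq => by have := (prime_of_mem_smallPrimes hq).pos; positivity)
    (fun _ hq => inv_lt_one_of_one_lt₀ (mod_cast (prime_of_mem_smallPrimes hq).one_lt)) ha

/-- `S` is a set of divisors of `R` and `W` a set of values below `#R.divisors` none of which may be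
assigned to a member of `S`, because it lies in the class `c q` modulo some prime factor `q` of that
divisor. -/
structure IsBlocked (c : ℕ → ℕ) (R : ℕ) (S W : Finset ℕ) : Prop where
  subset_divisors : S ⊆ R.divisors
  subset_range : W ⊆ range #R.divisors
  not_disjoint : ∀ d ∈ S, ∀ i ∈ W, ¬ Disjoint d.primeFactors (hits c R.primeFactors i)

/-- The proportion of `S` among the divisors of `R` whose set of prime factors up to `m` is `a`. -/
noncomputable def divisorDensity (R m : ℕ) (S a : Finset ℕ) : ℝ :=
  #{d ∈ S | d.primeFactors ∩ smallPrimes R m = a} /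
    (#R.divisors * bernoulliWeight (smallPrimes R m) (occurrenceProb R) a)

/-- The proportion of `W` among the values whose set of hit primes up to `m` is `b`, relative to
the expected number of such values below `#R.divisors`. -/
noncomputable def valueDensity (c : ℕ → ℕ) (R m : ℕ) (W b : Finset ℕ) : ℝ :=
  #{i ∈ W | hits c (smallPrimes R m) i = b} /
    (#R.divisors * bernoulliWeight (smallPrimes R m) (fun q : ℕ => (q : ℝ)⁻¹) b)

theorem card_filter_inter_smallPrimes_eq (hR : R ≠ 0) (ha : a ⊆ smallPrimes R m) :
    (#{d ∈ R.divisors | d.primeFactors ∩ smallPrimes R m = a} : ℝ) =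
      #R.divisors * bernoulliWeight (smallPrimes R m) (occurrenceProb R) a := by
  simpa using card_filter_inter_primeFactors_eq hR (smallPrimes_subset R m) ha (empty_subset _)

theorem divisorDensity_le_one (hR : R ≠ 0) (hS : S ⊆ R.divisors) (ha : a ⊆ smallPrimes R m) :
    divisorDensity R m S a ≤ 1 := by
  rw [divisorDensity, ← card_filter_inter_smallPrimes_eq hR ha]
  exact div_le_one_of_le₀ (mod_cast card_le_card (filter_subset_filter _ hS)) (by positivity)

theorem sum_bernoulliWeight_mul_divisorDensity (R m : ℕ) (S : Finset ℕ) :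
    ∑ a ∈ (smallPrimes R m).powerset, bernoulliWeight (smallPrimes R m) (occurrenceProb R) a *
      divisorDensity R m S a = #S / #R.divisors :=
  sum_mul_card_fiber_div (fun _ _ => mem_powerset.2 inter_subset_right)
    (fun _ ha => (bernoulliWeight_occurrenceProb_pos (mem_powerset.1 ha)).ne') _

theorem sum_bernoulliWeight_mul_valueDensity (c : ℕ → ℕ) (R m : ℕ) (W : Finset ℕ) :
    ∑ b ∈ (smallPrimes R m).powerset, bernoulliWeight (smallPrimes R m)
      (fun q : ℕ => (q : ℝ)⁻¹) b * valueDensity c R m W b = #W / #R.divisors :=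
  sum_mul_card_fiber_div (fun _ _ => mem_powerset.2 (hits_subset _ _ _))
    (fun _ hb => (bernoulliWeight_inv_pos (mem_powerset.1 hb)).ne') _

namespace WellSplit

variable (h : WellSplit R m)

include h

theorem choose_mul_prod_smallPrimes_div_le (hk : k ≤ m) :
    ((#(largePrimes R m)).choose k * ((∏ q ∈ smallPrimes R m, q : ℕ) / #R.divisors) : ℝ) ≤
      2 ^ 25 * (1 / 2) ^ (70 * m) := by
  have hM : (0 : ℝ) < #R.divisors := mod_cast h.card_divisors_pos
  rw [mul_div_assoc', div_le_iff₀ hM]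
  calc (((#(largePrimes R m)).choose k * (∏ q ∈ smallPrimes R m, q : ℕ) : ℝ))
      ≤ 2 ^ (28 * m + 25) * 2 ^ (2 * m) := by
        gcongr
        · exact mod_cast h.choose_card_largePrimes_le hk
        · exact mod_cast prod_smallPrimes_le R m
    _ = 2 ^ 25 * (1 / 2) ^ (70 * m) * 2 ^ (100 * m) := by
        rw [show 100 * m = 70 * m + 30 * m by ring, pow_add _ (70 * m), ← mul_assoc,
          mul_assoc (2 ^ 25), ← mul_pow, ← pow_add]
        norm_num [← pow_add]
        ring_nf
    _ ≤ 2 ^ 25 * (1 / 2) ^ (70 * m) * #R.divisors := by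
        gcongr
        exact mod_cast h.two_pow_le_card_divisors

theorem sum_powersetCard_prod_inv_le (k : ℕ) :
    ∑ T ∈ (largePrimes R m).powersetCard k, ∏ q ∈ T, (q : ℝ)⁻¹ ≤ (1 / 2) ^ (70 * k) := by
  rw [pow_mul]
  exact (sum_powersetCard_prod_le_pow (fun q _ => by positivity) k).trans
    (pow_le_pow_left₀ (sum_nonneg fun q _ => by positivity) h.sum_inv_le k)

theorem valueDensity_le (hW : W ⊆ range #R.divisors) (hb : b ⊆ smallPrimes R m)
    (hk : ∀ i ∈ W, hits c (smallPrimes R m) i = b → k ≤ #(hits c (largePrimes R m) i)) :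
    valueDensity c R m W b ≤ (1 / 2) ^ (70 * k) + densityError m := by
  have hM : (0 : ℝ) < #R.divisors := mod_cast h.card_divisors_pos
  have hpos := bernoulliWeight_inv_pos hb
  have hsieve := card_le_of_forall_le_card_hits (c := c) (k := min k m)
    (G := {i ∈ W | hits c (smallPrimes R m) i = b})
    (fun _ => prime_of_mem_smallPrimes) (fun _ => prime_of_mem_largePrimes)
    (disjoint_smallPrimes_largePrimes R m) hb h.card_divisors_pos.ne' ((filter_subset _ _).trans hW)
    (fun i hi => (mem_filter.1 hi).2)
    (fun i hi => (min_le_left k m).trans (hk i (mem_filter.1 hi).1 (mem_filter.1 hi).2))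
  have hmain := h.sum_powersetCard_prod_inv_le (min k m)
  have herror := h.choose_mul_prod_smallPrimes_div_le (min_le_right k m)
  have hη : 0 < (1 / 2 : ℝ) ^ (70 * m) := by positivity
  have hk0 : 0 < (1 / 2 : ℝ) ^ (70 * k) := by positivity
  rw [valueDensity, div_le_iff₀ (by positivity), mul_comm]
  refine hsieve.trans (mul_le_mul_of_nonneg_left ?_ (by positivity))
  unfold densityError
  rcases min_choice k m with hmin | hmin <;> rw [hmin] at hmain herror ⊢ <;> linarith

theorem divisorDensity_le_of_disjoint (hB : IsBlocked c R S W) (hi : i ∈ W)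
    (ha : a ⊆ smallPrimes R m) (hdisj : Disjoint a (hits c (smallPrimes R m) i)) :
    divisorDensity R m S a ≤ 1 - (1 / 2) ^ #(hits c (largePrimes R m) i) := by
  have hpos := bernoulliWeight_occurrenceProb_pos ha
  have hM : (0 : ℝ) < #R.divisors := mod_cast h.card_divisors_pos
  have hL := hits_subset c (largePrimes R m) i
  have count_all := card_filter_inter_smallPrimes_eq h.ne_zero ha
  have count_avoiding := card_filter_inter_primeFactors_eq h.ne_zero
    (smallPrimes_subset R m) ha (by rwa [primeFactors_sdiff_smallPrimes])
    (fun q hq => h.factorization_eq_one q (hL hq))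
  have hS_avoiding : Disjoint {d ∈ S | d.primeFactors ∩ smallPrimes R m = a}
      {d ∈ R.divisors | d.primeFactors ∩ smallPrimes R m = a ∧
        Disjoint d.primeFactors (hits c (largePrimes R m) i)} := by
    refine disjoint_left.2 fun d hd hd' => hB.not_disjoint d (mem_filter.1 hd).1 i hi ?_
    obtain ⟨-, rfl, hlarge⟩ := mem_filter.1 hd'
    rw [← smallPrimes_union_largePrimes R m, hits_union, disjoint_union_right]
    refine ⟨?_, hlarge⟩
    grind [disjoint_left, hits_subset]
  have hcard : #{d ∈ S | d.primeFactors ∩ smallPrimes R m = a} +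
      #{d ∈ R.divisors | d.primeFactors ∩ smallPrimes R m = a ∧
        Disjoint d.primeFactors (hits c (largePrimes R m) i)} ≤
      #{d ∈ R.divisors | d.primeFactors ∩ smallPrimes R m = a} := by
    rw [← card_union_of_disjoint hS_avoiding]
    exact card_le_card (union_subset (filter_subset_filter _ hB.subset_divisors)
      fun d hd => by grind)
  rw [divisorDensity, div_le_iff₀ (by positivity)]
  have : (#{d ∈ S | d.primeFactors ∩ smallPrimes R m = a} : ℝ) +
      #{d ∈ R.divisors | d.primeFactors ∩ smallPrimes R m = a ∧
        Disjoint d.primeFactors (hits c (largePrimes R m) i)} ≤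
      #{d ∈ R.divisors | d.primeFactors ∩ smallPrimes R m = a} := mod_cast hcard
  linarith

end WellSplit

theorem inv_sq_le_one_sub_occurrenceProb_sub_inv (hq : R.factorization q + 2 ≤ q) :
    ((q : ℝ) ^ 2)⁻¹ ≤ 1 - occurrenceProb R q - (q : ℝ)⁻¹ := by
  have hq' : (R.factorization q : ℝ) + 2 ≤ q := mod_cast hq
  have hpos : (0 : ℝ) < q := lt_of_lt_of_le (by positivity) hq'
  rw [one_sub_occurrenceProb, le_sub_iff_add_le]
  calc ((q : ℝ) ^ 2)⁻¹ + (q : ℝ)⁻¹ = (q + 1) / q ^ 2 := by field_simp; ring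
    _ ≤ (R.factorization q + 1 : ℝ)⁻¹ := by
        rw [← one_div, div_le_div_iff₀ (by positivity) (by positivity)]
        nlinarith

theorem occurrenceProb_add_inv_le_one (hq : R.factorization q + 2 ≤ q) :
    occurrenceProb R q + (q : ℝ)⁻¹ ≤ 1 := by
  have := inv_sq_le_one_sub_occurrenceProb_sub_inv hq
  have : (0 : ℝ) ≤ ((q : ℝ) ^ 2)⁻¹ := by positivity
  linarith

namespace WellSplit

variable (h : WellSplit R m)

include h

theorem card_hits_add_card_hits_le (hi : i < #R.divisors) (hj : j < #R.divisors) (hij : i ≠ j) :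
    #(hits c (largePrimes R m) i) + #(hits c (largePrimes R m) j) ≤ 120 * m := by
  let T := hits c (largePrimes R m) i ∩ hits c (largePrimes R m) j
  have hTL : T ⊆ largePrimes R m := inter_subset_left.trans (hits_subset _ _ _)
  have hmod : i ≡ j [MOD ∏ q ∈ T, q] :=
    modEq_prod (pairwise_coprime_of_prime fun q hq => prime_of_mem_largePrimes (hTL hq))
      fun q hq => (mem_hits.1 (mem_inter.1 hq).1).2.trans (mem_hits.1 (mem_inter.1 hq).2).2.symm
  have prod_lt : ∏ q ∈ T, q < #R.divisors := by
    by_contra! hle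
    exact hij (hmod.eq_of_lt_of_lt (hi.trans_le hle) (hj.trans_le hle))
  have hpow : 2 ^ (100 * #T) < 2 ^ (103 * m) := by
    rw [pow_mul]
    exact (pow_card_le_prod _ _ _ fun q hq => h.two_pow_le.trans
      (mem_filter.1 (hTL hq)).2.le).trans_lt (prod_lt.trans_le h.card_divisors_le)
  have hT := (Nat.pow_lt_pow_iff_right one_lt_two).1 hpow
  have hunion := card_le_card (union_subset (hits_subset c (largePrimes R m) i)
    (hits_subset c (largePrimes R m) j))
  have hm := h.two_pow_le
  have hL := h.card_largePrimes_lt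
  rw [← card_union_add_card_inter]
  change _ + #T ≤ _
  omega

theorem divisorDensity_add_valueDensity_le (hB : IsBlocked c R S W) (ha : a ⊆ smallPrimes R m)
    (hb : b ⊆ smallPrimes R m \ a) :
    divisorDensity R m S a + valueDensity c R m W b ≤ 1 + densityError m := by
  obtain ⟨hbs, hba⟩ := subset_sdiff.1 hb
  rcases {i ∈ W | hits c (smallPrimes R m) i = b}.eq_empty_or_nonempty with hempty | hne
  · have hβ : valueDensity c R m W b = 0 := by simp [valueDensity, hempty]
    linarith [divisorDensity_le_one h.ne_zero hB.subset_divisors ha, densityError_pos m]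
  · obtain ⟨i, hi, hmin⟩ := exists_min_image _ (fun i => #(hits c (largePrimes R m) i)) hne
    obtain ⟨hiW, rfl⟩ := mem_filter.1 hi
    have hσ := h.divisorDensity_le_of_disjoint hB hiW ha hba.symm
    have hβ := h.valueDensity_le hB.subset_range hbs fun j hj hjb =>
      hmin j (mem_filter.2 ⟨hj, hjb⟩)
    have hpow : (1 / 2 : ℝ) ^ (70 * #(hits c (largePrimes R m) i)) ≤
        (1 / 2) ^ #(hits c (largePrimes R m) i) :=
      pow_le_pow_of_le_one (by norm_num) (by norm_num) (by omega)
    linarith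

theorem density_gap_of_hits_eq_empty (hB : IsBlocked c R S W) (hS : S.Nonempty) (hi : i ∈ W)
    (hzero : hits c (largePrimes R m) i = ∅) :
    divisorDensity R m S ∅ + valueDensity c R m W ∅ ≤ 1 / 2 := by
  have hσ := h.divisorDensity_le_of_disjoint hB hi (empty_subset _) (disjoint_empty_left _)
  obtain ⟨d, hd⟩ := hS
  have one_le_card_hits : ∀ j ∈ W, hits c (smallPrimes R m) j = ∅ →
      1 ≤ #(hits c (largePrimes R m) j) := fun j hj hj0 => by
    refine card_pos.2 (nonempty_iff_ne_empty.2 fun hj0' => hB.not_disjoint d hd j hj ?_)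
    rw [← smallPrimes_union_largePrimes R m, hits_union, hj0, hj0', union_empty]
    exact disjoint_empty_right _
  have hβ := h.valueDensity_le hB.subset_range (empty_subset _) one_le_card_hits
  have hη : densityError m ≤ (1 / 2) ^ 2 := densityError_le (by linarith [h.two_pow_le])
  rw [hzero, card_empty] at hσ
  norm_num at hσ hβ hη ⊢
  linarith

theorem density_gap_of_hits_nonempty (hB : IsBlocked c R S W) (hi : i ∈ W)
    (hmin : ∀ j ∈ W, #(hits c (largePrimes R m) i) ≤ #(hits c (largePrimes R m) j))
    (hpos : 0 < #(hits c (largePrimes R m) i))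
    (hle : #(hits c (largePrimes R m) i) + 28 ≤ 70 * m) :
    divisorDensity R m S ∅ + valueDensity c R m W (hits c (smallPrimes R m) i) ≤
      1 - (1 / 2) ^ (#(hits c (largePrimes R m) i) + 1) := by
  have hσ := h.divisorDensity_le_of_disjoint hB hi (empty_subset _) (disjoint_empty_left _)
  have hβ := h.valueDensity_le hB.subset_range (hits_subset c (smallPrimes R m) i)
    fun j hj _ => hmin j hj
  set k := #(hits c (largePrimes R m) i)
  have hη : densityError m ≤ (1 / 2) ^ (k + 2) := densityError_le (by omega)
  have hmain : (1 / 2 : ℝ) ^ (70 * k) ≤ (1 / 2) ^ (k + 2) :=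
    pow_le_pow_of_le_one (by norm_num) (by norm_num) (by omega)
  rw [pow_add] at hη hmain
  rw [pow_succ]
  linarith

theorem exists_density_gap (hB : IsBlocked c R S W) (hS : S.Nonempty) (hW : 1 < #W) :
    ∃ b ⊆ smallPrimes R m,
      divisorDensity R m S ∅ + valueDensity c R m W b ≤ 1 - (1 / 2) ^ (60 * m + 1) := by
  have hm := h.two_pow_le
  obtain ⟨i, hi, hmin⟩ := exists_min_image W (fun i => #(hits c (largePrimes R m) i))
    (card_pos.1 (by omega))
  have gap_le : ∀ k ≤ 60 * m, (1 / 2 : ℝ) ^ (60 * m + 1) ≤ (1 / 2) ^ (k + 1) := fun k hk =>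
    pow_le_pow_of_le_one (by norm_num) (by norm_num) (by omega)
  rcases (hits c (largePrimes R m) i).eq_empty_or_nonempty with hzero | hne
  · refine ⟨∅, empty_subset _, (h.density_gap_of_hits_eq_empty hB hS hi hzero).trans ?_⟩
    have := gap_le 0 (Nat.zero_le _)
    norm_num at this ⊢
    linarith
  · have hle : #(hits c (largePrimes R m) i) ≤ 60 * m := by
      obtain ⟨j, hj, hji⟩ := exists_mem_ne hW i
      have := h.card_hits_add_card_hits_le (c := c) (mem_range.1 (hB.subset_range hi))
        (mem_range.1 (hB.subset_range hj)) hji.symm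
      have := hmin j hj
      omega
    exact ⟨_, hits_subset c (smallPrimes R m) i,
      (h.density_gap_of_hits_nonempty hB hi hmin (card_pos.2 hne) (by omega)).trans
        (sub_le_sub_left (gap_le _ hle) 1)⟩

theorem pow_le_couplingWeight (hb : b ⊆ smallPrimes R m) :
    (1 / 2) ^ (4 * m) ≤
      couplingWeight (smallPrimes R m) (occurrenceProb R) (fun q : ℕ => (q : ℝ)⁻¹) ∅ b := by
  have hQ : (∏ q ∈ smallPrimes R m, (q : ℝ)) ≤ 2 ^ (2 * m) := by
    rw [← Nat.cast_prod]
    exact_mod_cast prod_smallPrimes_le R m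
  have hQ0 : 0 < ∏ q ∈ smallPrimes R m, (q : ℝ) :=
    prod_pos fun q hq => mod_cast (prime_of_mem_smallPrimes hq).pos
  calc (1 / 2 : ℝ) ^ (4 * m) = ((2 ^ (2 * m)) ^ 2)⁻¹ := by
        rw [one_div, inv_pow, ← pow_mul]; ring_nf
    _ ≤ ((∏ q ∈ smallPrimes R m, (q : ℝ)) ^ 2)⁻¹ := by gcongr
    _ = (∏ q ∈ b, ((q : ℝ) ^ 2)⁻¹) * ∏ q ∈ smallPrimes R m \ b, ((q : ℝ) ^ 2)⁻¹ := by
        rw [mul_comm, prod_sdiff hb, prod_inv_distrib, prod_pow]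
    _ ≤ (∏ q ∈ b, (q : ℝ)⁻¹) *
          ∏ q ∈ smallPrimes R m \ b, (1 - occurrenceProb R q - (q : ℝ)⁻¹) := by
        gcongr with q hq q hq
        · exact mod_cast (prime_of_mem_smallPrimes (hb hq)).pos
        · exact le_self_pow₀ (mod_cast (prime_of_mem_smallPrimes (hb hq)).one_le) two_ne_zero
        · exact inv_sq_le_one_sub_occurrenceProb_sub_inv
            (h.factorization_add_two_le q (smallPrimes_subset R m (sdiff_subset hq)))
    _ = _ := by simp [couplingWeight]

theorem densityError_le_couplingWeight_mul (hb : b ⊆ smallPrimes R m) :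
    densityError m ≤ couplingWeight (smallPrimes R m) (occurrenceProb R)
      (fun q : ℕ => (q : ℝ)⁻¹) ∅ b * (1 / 2) ^ (60 * m + 1) := calc
  densityError m ≤ (1 / 2) ^ (4 * m) * (1 / 2) ^ (60 * m + 1) := by
    rw [← pow_add]
    have := h.two_pow_le
    exact densityError_le (by omega)
  _ ≤ _ := by
    gcongr
    exact h.pow_le_couplingWeight hb

theorem card_add_card_le (hB : IsBlocked c R S W) : #S + #W ≤ #R.divisors := by
  have hS := card_le_card hB.subset_divisors
  have hW := card_le_card hB.subset_range
  rw [card_range] at hW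
  rcases S.eq_empty_or_nonempty with rfl | hSne
  · simpa using hW
  rcases W.eq_empty_or_nonempty with rfl | ⟨i, hi⟩
  · simpa using hS
  have one_notMem : 1 ∉ S := fun h1 => hB.not_disjoint 1 h1 i hi (by simp)
  have hSlt : #S < #R.divisors := card_lt_card (Finset.ssubset_iff_subset_ne.2
    ⟨hB.subset_divisors, fun heq => one_notMem (heq ▸ Nat.one_mem_divisors.2 h.ne_zero)⟩)
  rcases le_or_gt #W 1 with hW1 | hW1
  · omega
  obtain ⟨b₀, hb₀, hgap⟩ := h.exists_density_gap hB hSne hW1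
  have hsum := sum_bernoulliWeight_mul_add_le
    (fun q hq => (occurrenceProb_pos (smallPrimes_subset R m hq)).le) (fun q _ => by positivity)
    (fun q hq => occurrenceProb_add_inv_le_one
      (h.factorization_add_two_le q (smallPrimes_subset R m hq))) hb₀
    (fun a ha b hb => h.divisorDensity_add_valueDensity_le hB ha hb) hgap
  rw [sum_bernoulliWeight_mul_divisorDensity, sum_bernoulliWeight_mul_valueDensity, mul_add] at hsum
  have hcoupling := h.densityError_le_couplingWeight_mul hb₀
  have hcoupling_nonneg := le_trans (by positivity) (h.pow_le_couplingWeight hb₀)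
  have herror := mul_nonneg hcoupling_nonneg (densityError_pos m).le
  have hM : (0 : ℝ) < #R.divisors := mod_cast h.card_divisors_pos
  have : ((#S + #W : ℕ) : ℝ) / #R.divisors ≤ 1 := by
    push_cast
    rw [add_div]
    linarith
  exact_mod_cast (div_le_one hM).1 this

end WellSplit

/-- Every choice of residue classes `c q` modulo the primes `q ∣ R` admits an assignment of the
values below `#R.divisors` to the divisors of `R` in which the value at `d` avoids the chosen class
of each prime factor of `d`. -/
def ResidueMatchable (R : ℕ) : Prop :=
  ∀ c : ℕ → ℕ, ∃ f : ℕ → ℕ, Set.BijOn f R.divisors (range #R.divisors) ∧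
    ∀ d ∈ R.divisors, ∀ q ∈ d.primeFactors, ¬ f d ≡ c q [MOD q]

theorem WellSplit.residueMatchable (h : WellSplit R m) : ResidueMatchable R := by
  intro c
  obtain ⟨f, hf, hdisj⟩ := exists_bijOn_of_card_add_card_le (card_range _).symm
    (fun d i => Disjoint d.primeFactors (hits c R.primeFactors i))
    fun S hS W hW hSW => h.card_add_card_le ⟨hS, hW, hSW⟩
  refine ⟨f, hf, fun d hd q hq hmod => disjoint_left.1 (hdisj d hd) hq (mem_hits.2 ⟨?_, hmod⟩)⟩
  exact Nat.primeFactors_mono (Nat.dvd_of_mem_divisors hd) h.ne_zero hq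

end WellSplit

section PrimeEstimates

theorem eventually_primeCounting_le_mul {δ : ℝ} (hδ : 0 < δ) :
    ∀ᶠ n : ℕ in atTop, (n.primeCounting : ℝ) ≤ δ * n := by
  have hpi := tendsto_natCast_atTop_atTop.eventually
    (Chebyshev.eventually_primeCounting_le one_pos)
  have hlog := (Real.tendsto_log_atTop.comp tendsto_natCast_atTop_atTop).eventually_ge_atTop
    ((Real.log 4 + 1) / δ)
  filter_upwards [hpi, hlog] with n hpi hlog
  have hlog4 : 0 < Real.log 4 + 1 := by positivity
  have hlog_pos : 0 < Real.log n := (div_pos hlog4 hδ).trans_le hlog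
  rw [Nat.floor_natCast] at hpi
  refine hpi.trans ?_
  rw [div_le_iff₀ hlog_pos, mul_right_comm]
  gcongr
  rwa [← div_le_iff₀' hδ]

theorem sqrt_isLittleO_primeCounting :
    (fun n : ℕ => √n) =o[atTop] fun n => (n.primeCounting : ℝ) := by
  refine Asymptotics.isLittleO_iff.2 fun c hc => ?_
  have hlog_sqrt : ∀ᶠ n : ℕ in atTop, Real.log n ≤ c / 4 * √n := by
    filter_upwards [tendsto_natCast_atTop_atTop.eventually ((isLittleO_log_rpow_atTop
      (r := 1 / 2) (by norm_num)).bound (c := c / 4) (by positivity))] with n hn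
    rw [← Real.sqrt_eq_rpow, Real.norm_of_nonneg (Real.sqrt_nonneg _)] at hn
    exact (le_abs_self _).trans hn
  have hlog_succ : ∀ᶠ n : ℕ in atTop, Real.log (n + 1) ≤ 1 / 8 * (n + 1) := by
    filter_upwards [(tendsto_natCast_atTop_atTop.comp (tendsto_add_atTop_nat 1)).eventually
      (Real.isLittleO_log_id_atTop.bound (c := 1 / 8) (by norm_num))] with n hn
    have hn1 : (0 : ℝ) ≤ n + 1 := by positivity
    simpa [abs_of_nonneg hn1] using (le_abs_self _).trans hn
  filter_upwards [hlog_sqrt, hlog_succ, eventually_ge_atTop 2] with n hlog_sqrt hlog_succ hn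
  have hn' : (2 : ℝ) ≤ n := mod_cast hn
  have hpi := Chebyshev.pi_ge n
  rw [div_le_iff₀ (Real.log_pos (by linarith))] at hpi
  have hquarter : n / 4 ≤ n.primeCounting * Real.log n := by
    nlinarith [Real.log_two_gt_d9]
  rw [Real.norm_of_nonneg (Real.sqrt_nonneg _), Real.norm_of_nonneg (Nat.cast_nonneg _)]
  refine le_of_mul_le_mul_right ?_ (Real.sqrt_pos.2 (by linarith : (0 : ℝ) < n))
  rw [Real.mul_self_sqrt (Nat.cast_nonneg _)]
  have := mul_le_mul_of_nonneg_left hlog_sqrt (Nat.cast_nonneg n.primeCounting)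
  linarith

theorem sum_inv_le_card_div {L : Finset ℕ} {a : ℝ} (ha : 0 < a) (hL : ∀ q ∈ L, a ≤ q) :
    ∑ q ∈ L, (q : ℝ)⁻¹ ≤ #L / a := by
  rw [div_eq_mul_inv, ← nsmul_eq_mul]
  exact sum_le_card_nsmul _ _ _ fun q hq => inv_anti₀ ha (hL q hq)

/-- Few primes lie between `m` and `A * m`, while the primes beyond `A * m` have small
reciprocals. -/
theorem eventually_sum_inv_le (C : ℕ) {ε : ℝ} (hε : 0 < ε) :
    ∀ᶠ m : ℕ in atTop, ∀ L : Finset ℕ, (∀ q ∈ L, q.Prime) → (∀ q ∈ L, m < q) → #L ≤ C * m →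
      ∑ q ∈ L, (q : ℝ)⁻¹ ≤ ε := by
  obtain ⟨A, hA⟩ := exists_nat_gt (2 * C / ε)
  have hA0 : (0 : ℝ) < A := lt_of_le_of_lt (by positivity) hA
  rw [div_lt_iff₀ hε] at hA
  have hpi := (tendsto_id.const_mul_atTop' (Nat.cast_pos.1 hA0)).eventually
    (eventually_primeCounting_le_mul (δ := ε / (2 * A)) (by positivity))
  filter_upwards [hpi, eventually_gt_atTop 0] with m hpi hm L hprime hlarge hcard
  have hm0 : (0 : ℝ) < m := mod_cast hm
  have hnear : ∑ q ∈ L with q ≤ A * m, (q : ℝ)⁻¹ ≤ ε / 2 := by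
    have hcard_near : #{q ∈ L | q ≤ A * m} ≤ (A * m).primeCounting := by
      rw [← Nat.primesLE_card_eq_primeCounting]
      exact card_le_card fun q hq =>
        Nat.mem_primesLE.2 ⟨(mem_filter.1 hq).2, hprime q (mem_filter.1 hq).1⟩
    refine (sum_inv_le_card_div hm0 fun q hq =>
      Nat.cast_le.2 (hlarge q (mem_filter.1 hq).1).le).trans ?_
    rw [div_le_iff₀ hm0]
    refine (Nat.cast_le.2 hcard_near).trans (hpi.trans_eq ?_)
    push_cast [id]
    field_simp
  have hfar : ∑ q ∈ L with ¬ q ≤ A * m, (q : ℝ)⁻¹ ≤ ε / 2 := by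
    refine (sum_inv_le_card_div (a := A * m) (by positivity) fun q hq =>
      mod_cast (not_le.1 (mem_filter.1 hq).2).le).trans ?_
    have hcard_far : (#{q ∈ L | ¬ q ≤ A * m} : ℝ) ≤ C * m :=
      mod_cast (card_filter_le _ _).trans hcard
    rw [div_le_iff₀ (by positivity)]
    nlinarith
  rw [← sum_filter_add_sum_filter_not L (fun q => q ≤ A * m)]
  linarith

theorem oddPrime_le {j m : ℕ} (hj : 0 < j) (h : j < m.primeCounting) : oddPrime j ≤ m := by
  refine Nat.lt_succ_iff.1 (Nat.nth_lt_of_lt_count ?_)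
  have primeCounting_le : m.primeCounting ≤ Nat.count (fun p => p.Prime ∧ p ≠ 2) (m + 1) + 1 := by
    rw [Nat.primeCounting, Nat.primeCounting', Nat.count_eq_card_filter_range,
      Nat.count_eq_card_filter_range, ← filter_filter, filter_ne']
    exact Nat.sub_le_iff_le_add.1 pred_card_le_card_erase
  rw [Nat.succ_eq_add_one]
  omega

theorem eventually_oddPrime_sqrt_le : ∀ᶠ l : ℕ in atTop, oddPrime (Nat.sqrt l) ≤ l / 100 := by
  have hpi := (Nat.tendsto_div_const_atTop (by norm_num : 100 ≠ 0)).eventually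
    (sqrt_isLittleO_primeCounting.bound (c := 1 / 16) (by norm_num))
  filter_upwards [hpi, eventually_ge_atTop 100] with l hpi hl
  refine oddPrime_le (Nat.sqrt_pos.2 (by omega)) ?_
  rw [Real.norm_of_nonneg (Real.sqrt_nonneg _), Real.norm_of_nonneg (Nat.cast_nonneg _)] at hpi
  have hm : (1 : ℝ) ≤ (l / 100 : ℕ) := by exact_mod_cast (by omega : 1 ≤ l / 100)
  have hl' : (l : ℝ) ≤ 200 * (l / 100 : ℕ) := by exact_mod_cast (by omega : l ≤ 200 * (l / 100))
  have hsqrt : (Nat.sqrt l : ℝ) ≤ 15 * √(l / 100 : ℕ) := calc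
    (Nat.sqrt l : ℝ) ≤ √l := Real.nat_sqrt_le_real_sqrt
    _ ≤ √(15 ^ 2 * (l / 100 : ℕ)) := Real.sqrt_le_sqrt (by linarith)
    _ = 15 * √(l / 100 : ℕ) := by
      rw [Real.sqrt_mul (by norm_num), Real.sqrt_sq (by norm_num)]
  have hpos : 0 < √(l / 100 : ℕ) := Real.sqrt_pos.2 (by linarith)
  have : (Nat.sqrt l : ℝ) < (l / 100).primeCounting := by linarith
  exact_mod_cast this

end PrimeEstimates

section TightPrimes

variable {n d d' m p q P R : ℕ}

theorem ne_zero_of_isMNumber (hM : IsMNumber n) : n ≠ 0 := by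
  rintro rfl
  exact hM 2 Nat.prime_two (dvd_zero _)

theorem factorization_le_of_isMNumber (hM : IsMNumber n) (hp : p.Prime) :
    n.factorization p ≤ p - 1 := by
  by_contra! h
  exact hM p hp ((hp.pow_dvd_iff_le_factorization (ne_zero_of_isMNumber hM)).2 (by omega))

/-- The tight primes of `n`, whose powers make up `tightPart n`. -/
def tightPrimes (n : ℕ) : Finset ℕ := {p ∈ n.primeFactors | n.factorization p = p - 1}

theorem prime_of_mem_tightPrimes (hp : p ∈ tightPrimes n) : p.Prime :=
  Nat.prime_of_mem_primeFactors (mem_filter.1 hp).1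

theorem nonTightPart_eq_prod (hn : n ≠ 0) :
    nonTightPart n =
      (n.factorization.filter fun p => ¬ n.factorization p = p - 1).prod (· ^ ·) := by
  have htight : tightPart n =
      (n.factorization.filter fun p => n.factorization p = p - 1).prod (· ^ ·) := by
    rw [Finsupp.prod_filter_index]
    exact prod_congr rfl fun p hp => by rw [(mem_filter.1 hp).2]
  have htight_pos : 0 < tightPart n :=
    prod_pos fun p hp => pow_pos (prime_of_mem_tightPrimes hp).pos _
  refine Nat.div_eq_of_eq_mul_right htight_pos ?_
  rw [htight, Finsupp.prod_filter_mul_prod_filter_not, Nat.prod_factorization_pow_eq_self hn]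

theorem nonTightPart_ne_zero (hn : n ≠ 0) : nonTightPart n ≠ 0 := by
  rw [nonTightPart_eq_prod hn, Finsupp.prod_filter_index]
  exact prod_ne_zero_iff.2 fun p hp =>
    pow_ne_zero _ (Nat.prime_of_mem_primeFactors (filter_subset _ _ hp)).ne_zero

theorem factorization_nonTightPart (hn : n ≠ 0) :
    (nonTightPart n).factorization =
      n.factorization.filter fun p => ¬ n.factorization p = p - 1 := by
  rw [nonTightPart_eq_prod hn]
  exact Nat.prod_pow_factorization_eq_self fun p hp =>
    Nat.prime_of_mem_primeFactors (filter_subset _ _ hp)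

theorem primeFactors_nonTightPart (hn : n ≠ 0) :
    (nonTightPart n).primeFactors = {p ∈ n.primeFactors | ¬ n.factorization p = p - 1} := by
  rw [← Nat.support_factorization, factorization_nonTightPart hn, Finsupp.support_filter,
    Nat.support_factorization]

theorem factorization_nonTightPart_of_mem (hn : n ≠ 0) (hp : p ∈ (nonTightPart n).primeFactors) :
    (nonTightPart n).factorization p = n.factorization p := by
  rw [primeFactors_nonTightPart hn] at hp
  rw [factorization_nonTightPart hn, Finsupp.filter_apply, if_pos (mem_filter.1 hp).2]

theorem mem_tightPrimes_or_mem_primeFactors_nonTightPart (hn : n ≠ 0) (hp : p ∈ n.primeFactors) :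
    p ∈ tightPrimes n ∨ p ∈ (nonTightPart n).primeFactors := by
  rw [primeFactors_nonTightPart hn, tightPrimes, mem_filter, mem_filter]
  tauto

theorem coprime_prod_tightPrimes (hn : n ≠ 0) (hq : q ∈ (nonTightPart n).primeFactors) :
    q.Coprime (∏ p ∈ tightPrimes n, p) := by
  refine Nat.Coprime.prod_right fun p hp => (Nat.coprime_primes
    (Nat.prime_of_mem_primeFactors hq) (prime_of_mem_tightPrimes hp)).2 ?_
  rintro rfl
  rw [primeFactors_nonTightPart hn] at hq
  exact (mem_filter.1 hq).2 (mem_filter.1 hp).2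

theorem card_divisors_eq_prod_tightPrimes_mul (hn : n ≠ 0) :
    #n.divisors = (∏ p ∈ tightPrimes n, p) * #(nonTightPart n).divisors := by
  rw [Nat.card_divisors hn, Nat.card_divisors (nonTightPart_ne_zero hn),
    ← prod_filter_mul_prod_filter_not n.primeFactors (fun p => n.factorization p = p - 1),
    ← primeFactors_nonTightPart hn]
  congr 1
  · refine prod_congr rfl fun p hp => ?_
    rw [(mem_filter.1 hp).2, Nat.sub_add_cancel (prime_of_mem_tightPrimes hp).one_le]
  · exact prod_congr rfl fun p hp => by rw [factorization_nonTightPart_of_mem hn hp]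

/-- The residue `r` modulo the product of the tight primes `p` of `n` that encodes the valuations of
`d` at these primes by `r + 1 ≡ v_p(d)` modulo `p`. -/
def tightResidue (n d : ℕ) : ℕ :=
  Nat.chineseRemainderOfFinset (fun p => d.factorization p + (p - 1)) id (tightPrimes n)
    (fun _ hp => (prime_of_mem_tightPrimes hp).ne_zero)
    (pairwise_coprime_of_prime fun _ => prime_of_mem_tightPrimes)

theorem tightResidue_lt (n d : ℕ) : tightResidue n d < ∏ p ∈ tightPrimes n, p :=
  Nat.chineseRemainderOfFinset_lt_prod ..

theorem tightResidue_add_one_modEq (hp : p ∈ tightPrimes n) (d : ℕ) :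
    tightResidue n d + 1 ≡ d.factorization p [MOD p] := by
  have hcrt := (Nat.chineseRemainderOfFinset (fun p => d.factorization p + (p - 1)) id
    (tightPrimes n) (fun _ hp => (prime_of_mem_tightPrimes hp).ne_zero)
    (pairwise_coprime_of_prime fun _ => prime_of_mem_tightPrimes)).2 p hp
  have := hcrt.add_right 1
  rw [add_assoc, Nat.sub_add_cancel (prime_of_mem_tightPrimes hp).one_le] at this
  exact this.trans (Nat.add_modEq_right ..)

theorem factorization_lt_of_mem_tightPrimes (hd : d ∈ n.divisors) (hp : p ∈ tightPrimes n) :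
    d.factorization p < p := by
  obtain ⟨hdn, hn⟩ := Nat.mem_divisors.1 hd
  have hle := (Nat.factorization_le_iff_dvd (Nat.pos_of_mem_divisors hd).ne' hn).2 hdn p
  have := (mem_filter.1 hp).2
  have := (prime_of_mem_tightPrimes hp).pos
  omega

theorem gcd_nonTightPart_mem_divisors (hn : n ≠ 0) (d : ℕ) :
    d.gcd (nonTightPart n) ∈ (nonTightPart n).divisors :=
  Nat.mem_divisors.2 ⟨Nat.gcd_dvd_right _ _, nonTightPart_ne_zero hn⟩

theorem factorization_gcd_nonTightPart (hd : d ∈ n.divisors)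
    (hq : q ∈ (nonTightPart n).primeFactors) :
    (d.gcd (nonTightPart n)).factorization q = d.factorization q := by
  obtain ⟨hdn, hn⟩ := Nat.mem_divisors.1 hd
  have hd0 := (Nat.pos_of_mem_divisors hd).ne'
  rw [Nat.factorization_gcd hd0 (nonTightPart_ne_zero hn), Finsupp.inf_apply,
    factorization_nonTightPart_of_mem hn hq]
  exact inf_eq_left.2 ((Nat.factorization_le_iff_dvd hd0 hn).2 hdn q)

theorem eq_of_tightResidue_eq_of_gcd_eq (hd : d ∈ n.divisors) (hd' : d' ∈ n.divisors)
    (htight : tightResidue n d = tightResidue n d')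
    (hgcd : d.gcd (nonTightPart n) = d'.gcd (nonTightPart n)) : d = d' := by
  obtain ⟨hdn, hn⟩ := Nat.mem_divisors.1 hd
  have hd'n := Nat.dvd_of_mem_divisors hd'
  refine Nat.eq_of_factorization_eq (Nat.pos_of_mem_divisors hd).ne'
    (Nat.pos_of_mem_divisors hd').ne' fun p => ?_
  by_cases hp : p ∈ n.primeFactors
  · rcases mem_tightPrimes_or_mem_primeFactors_nonTightPart hn hp with hp | hp
    · have hmod := (tightResidue_add_one_modEq hp d).symm.trans
        (htight ▸ tightResidue_add_one_modEq hp d')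
      exact hmod.eq_of_lt_of_lt (factorization_lt_of_mem_tightPrimes hd hp)
        (factorization_lt_of_mem_tightPrimes hd' hp)
    · rw [← factorization_gcd_nonTightPart hd hp, ← factorization_gcd_nonTightPart hd' hp, hgcd]
  · have hzero : ∀ e, e ∣ n → e.factorization p = 0 := fun e he =>
      Finsupp.notMem_support_iff.1 fun h => hp (Nat.primeFactors_mono he hn h)
    rw [hzero d hdn, hzero d' hd'n]

/-- As `P` is invertible modulo `q`, divisibility of `r + P * i` by `q` confines `i` to a single
residue class modulo `q`. -/
theorem ResidueMatchable.exists_bijOn_not_dvd (h : ResidueMatchable R)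
    (hP : ∀ q ∈ R.primeFactors, q.Coprime P) (r : ℕ) :
    ∃ f : ℕ → ℕ, Set.BijOn f R.divisors (range #R.divisors) ∧
      ∀ x ∈ R.divisors, ∀ q ∈ x.primeFactors, ¬ q ∣ r + P * f x := by
  have forbidden_class : ∀ q ∈ R.primeFactors, ∃ c, ∀ i, q ∣ r + P * i → i ≡ c [MOD q] := by
    intro q hq
    by_cases hex : ∃ i, q ∣ r + P * i
    · obtain ⟨c, hc⟩ := hex
      refine ⟨c, fun i hi => Nat.ModEq.cancel_left_of_coprime (hP q hq) ?_⟩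
      exact Nat.ModEq.add_left_cancel' r
        ((Nat.modEq_zero_iff_dvd.2 hi).trans (Nat.modEq_zero_iff_dvd.2 hc).symm)
    · exact ⟨0, fun i hi => (hex ⟨i, hi⟩).elim⟩
  choose! c hc using forbidden_class
  obtain ⟨f, hf, havoid⟩ := h c
  refine ⟨f, hf, fun x hx q hq hdvd => havoid x hx q hq (hc q ?_ _ hdvd)⟩
  obtain ⟨hxR, hR⟩ := Nat.mem_divisors.1 hx
  exact Nat.primeFactors_mono hxR hR hq

/-- The map on the divisors of `n` glued from maps `F r` on the divisors of the non-tight part,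
where `r` runs over the tight residues. Modulo a tight prime `p` its value at `d` is `v_p(d)`, so
`p` does not divide both `d` and the value. -/
def gluedMap (n : ℕ) (F : ℕ → ℕ → ℕ) (d : ℕ) : ℕ :=
  tightResidue n d + 1 +
    (∏ p ∈ tightPrimes n, p) * F (tightResidue n d) (d.gcd (nonTightPart n))

theorem not_dvd_gluedMap (hd : d ∈ n.divisors) (hp : p ∈ tightPrimes n) (hpd : p ∣ d)
    (F : ℕ → ℕ → ℕ) : ¬ p ∣ gluedMap n F d := by
  intro h
  have hdvd := (Nat.dvd_add_left ((dvd_prod_of_mem (fun p => p) hp).mul_right _)).1 h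
  rw [(tightResidue_add_one_modEq hp d).dvd_iff dvd_rfl] at hdvd
  have hpos := (prime_of_mem_tightPrimes hp).factorization_pos_of_dvd
    (Nat.pos_of_mem_divisors hd).ne' hpd
  exact (Nat.le_of_dvd hpos hdvd).not_gt (factorization_lt_of_mem_tightPrimes hd hp)

theorem bijOn_gluedMap (hn : n ≠ 0) {F : ℕ → ℕ → ℕ}
    (hF : ∀ r, Set.BijOn (F r) (nonTightPart n).divisors (range #(nonTightPart n).divisors)) :
    Set.BijOn (gluedMap n F) n.divisors (Icc 1 #n.divisors) := by
  have hmaps : Set.MapsTo (gluedMap n F) n.divisors (Icc 1 #n.divisors) := fun d _ => by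
    refine mem_Icc.2 ⟨by rw [gluedMap]; omega, ?_⟩
    have hlt := mem_range.1 ((hF (tightResidue n d)).mapsTo (gcd_nonTightPart_mem_divisors hn d))
    rw [card_divisors_eq_prod_tightPrimes_mul hn, gluedMap]
    nlinarith [tightResidue_lt n d]
  have hinj : Set.InjOn (gluedMap n F) n.divisors := fun d hd d' hd' hdd' => by
    rw [gluedMap, gluedMap, add_right_comm, add_right_comm _ 1, Nat.add_right_cancel_iff] at hdd'
    have htight : tightResidue n d = tightResidue n d' := by
      simpa only [Nat.add_mul_mod_self_left, Nat.mod_eq_of_lt (tightResidue_lt n _)]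
        using congrArg (· % ∏ p ∈ tightPrimes n, p) hdd'
    rw [htight] at hdd'
    have hF_eq := Nat.eq_of_mul_eq_mul_left (Nat.zero_lt_of_lt (tightResidue_lt n d))
      (Nat.add_left_cancel hdd')
    exact eq_of_tightResidue_eq_of_gcd_eq hd hd' htight ((hF _).injOn
      (gcd_nonTightPart_mem_divisors hn d) (gcd_nonTightPart_mem_divisors hn d') hF_eq)
  exact ⟨hmaps, hinj, surjOn_of_injOn_of_card_le _ hmaps hinj (by simp)⟩

theorem matchable_of_residueMatchable (hn : n ≠ 0) (h : ResidueMatchable (nonTightPart n)) :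
    Matchable n := by
  choose F hF hF_dvd using fun r =>
    h.exists_bijOn_not_dvd (fun q hq => coprime_prod_tightPrimes hn hq) (r + 1)
  refine ⟨_, bijOn_gluedMap hn hF, fun d hd => ?_⟩
  refine Nat.coprime_of_dvd fun p hp hpd hpψ => ?_
  have hpn : p ∈ n.primeFactors :=
    Nat.mem_primeFactors.2 ⟨hp, hpd.trans (Nat.dvd_of_mem_divisors hd), hn⟩
  rcases mem_tightPrimes_or_mem_primeFactors_nonTightPart hn hpn with hpT | hpR
  · exact not_dvd_gluedMap hd hpT hpd F hpψ
  · have hgcd := gcd_nonTightPart_mem_divisors hn d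
    refine hF_dvd _ _ hgcd p (Nat.mem_primeFactors.2 ⟨hp, ?_, ?_⟩) hpψ
    · exact Nat.dvd_gcd hpd (Nat.dvd_of_mem_primeFactors hpR)
    · exact (Nat.pos_of_mem_divisors hgcd).ne'

theorem factorization_nonTightPart_add_two_le (hM : IsMNumber n)
    (hq : q ∈ (nonTightPart n).primeFactors) : (nonTightPart n).factorization q + 2 ≤ q := by
  have hn := ne_zero_of_isMNumber hM
  have hle := factorization_le_of_isMNumber hM (Nat.prime_of_mem_primeFactors hq)
  have hpos := (Nat.prime_of_mem_primeFactors hq).factorization_pos_of_dvd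
    (nonTightPart_ne_zero hn) (Nat.dvd_of_mem_primeFactors hq)
  rw [factorization_nonTightPart_of_mem hn hq] at hpos ⊢
  rw [primeFactors_nonTightPart hn, mem_filter] at hq
  have := hq.2
  omega

theorem factorization_nonTightPart_eq_one (hn : n ≠ 0)
    (hsq : ∀ q : ℕ, q.Prime → q ∣ n → n.factorization q ≠ q - 1 → m < q → ¬ q ^ 2 ∣ n)
    (hq : q ∈ largePrimes (nonTightPart n) m) : (nonTightPart n).factorization q = 1 := by
  obtain ⟨hqR, hmq⟩ := mem_filter.1 hq
  have hprime := Nat.prime_of_mem_primeFactors hqR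
  have hpos := hprime.factorization_pos_of_dvd (nonTightPart_ne_zero hn)
    (Nat.dvd_of_mem_primeFactors hqR)
  rw [factorization_nonTightPart_of_mem hn hqR] at hpos ⊢
  rw [primeFactors_nonTightPart hn, mem_filter] at hqR
  have := hsq q hprime (Nat.dvd_of_mem_primeFactors hqR.1) hqR.2 hmq
  rw [hprime.pow_dvd_iff_le_factorization hn] at this
  omega

theorem eventually_wellSplit_nonTightPart : ∀ᶠ l : ℕ in atTop, ∀ n, IsMNumber n →
    #(nonTightPart n).primeFactors = l →
    (∀ q : ℕ, q.Prime → q ∣ n → n.factorization q ≠ q - 1 → l / 100 < q → ¬ q ^ 2 ∣ n) →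
    WellSplit (nonTightPart n) (l / 100) := by
  filter_upwards [(Nat.tendsto_div_const_atTop (by norm_num : 100 ≠ 0)).eventually
    ((eventually_ge_atTop (2 ^ 100)).and
      (eventually_sum_inv_le 101 (ε := (1 / 2) ^ 70) (by positivity)))] with l hl n hM hcard hsq
  have hn := ne_zero_of_isMNumber hM
  refine ⟨nonTightPart_ne_zero hn, hl.1, congrArg (· / 100) hcard,
    fun q => factorization_nonTightPart_add_two_le hM,
    fun q => factorization_nonTightPart_eq_one hn hsq,
    hl.2 _ (fun q => prime_of_mem_largePrimes) (fun q hq => (mem_filter.1 hq).2) ?_⟩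
  have := hl.1
  have := card_le_card (largePrimes_subset (nonTightPart n) (l / 100))
  omega

end TightPrimes

end DivisorMatching

theorem stmt_11_general :
    ∃ N : ℕ, ∀ n : ℕ, IsMNumber n → N ≤ (nonTightPart n).primeFactors.card →
      (∀ q : ℕ, q.Prime → q ∣ n → n.factorization q ≠ q - 1 →
        (nonTightPart n).primeFactors.card / 100 < q → ¬ q ^ 2 ∣ n) →
      Matchable n := by
  obtain ⟨N, hN⟩ := Filter.eventually_atTop.1 DivisorMatching.eventually_wellSplit_nonTightPart
  exact ⟨N, fun n hM hcard hsq => DivisorMatching.matchable_of_residueMatchable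
    (DivisorMatching.ne_zero_of_isMNumber hM) (hN _ hcard n hM rfl hsq).residueMatchable⟩

theorem stmt_11 :
    ∃ N : ℕ, ∀ n : ℕ, 0 < n → IsMNumber n →
      N ≤ (nonTightPart n).primeFactors.card →
      (∀ q : ℕ, q.Prime → q ∣ n → n.factorization q ≠ q - 1 →
        oddPrime (Nat.sqrt ((nonTightPart n).primeFactors.card)) < q →
        ¬ q ^ 2 ∣ n) →
      Matchable n := by
  obtain ⟨N, hN⟩ := stmt_11_general
  obtain ⟨N', hN'⟩ := Filter.eventually_atTop.1 DivisorMatching.eventually_oddPrime_sqrt_le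
  exact ⟨max N N', fun n _ hM hcard hsq => hN n hM (le_of_max_le_left hcard)
    fun q hq hqn hqT hlt => hsq q hq hqn hqT ((hN' _ (le_of_max_le_right hcard)).trans_lt hlt)⟩
end

section
/- The set of M-numbers that are not matchable has asymptotic density 0, i.e., #{n ≤ x : n is an M-number and n is not matchable}/x → 0 as x → ∞. -/
open Filter Finset
open scoped Topology

/-! ### Coprime assignments -/

/-- Hall's marriage theorem with every value replaced by `L` copies of itself. -/
theorem exists_card_fiber_le_of_hall {α β : Type*} [Nonempty β] [DecidableEq β] {J : Finset α}
    {t : α → Finset β} {L : ℕ} (h : ∀ A ⊆ J, #A ≤ #(A.biUnion t) * L) :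
    ∃ f : α → β, (∀ j ∈ J, f j ∈ t j) ∧ ∀ b, #{j ∈ J | f j = b} ≤ L := by
  classical
  have hall (s : Finset J) : #s ≤ #(s.biUnion fun j => t j ×ˢ range L) := by
    have hs : (s.biUnion fun j => t j ×ˢ range L) =
        (s.map (.subtype (· ∈ J))).biUnion t ×ˢ range L := by
      ext ⟨b, i⟩
      simp only [mem_biUnion, mem_product, Finset.mem_map, Function.Embedding.subtype_apply]
      aesop
    rw [hs, card_product, card_range, ← card_map (.subtype (· ∈ J))]
    exact h _ fun a ha => property_of_mem_map_subtype s ha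
  obtain ⟨f, hinj, hf⟩ := (all_card_le_biUnion_card_iff_exists_injective _).1 hall
  obtain ⟨F, hF⟩ : ∃ F : α → β × ℕ, ∀ j : J, F j = f j :=
    ⟨Function.extend Subtype.val f fun _ => (Classical.arbitrary β, 0),
      fun j => Subtype.val_injective.extend_apply f _ j⟩
  have hFt : ∀ j ∈ J, F j ∈ t j ×ˢ range L := fun j hj => hF ⟨j, hj⟩ ▸ hf ⟨j, hj⟩
  have hFinj : Set.InjOn F J := fun x hx y hy hxy =>
    congrArg Subtype.val (hinj ((hF ⟨x, hx⟩).symm.trans (hxy.trans (hF ⟨y, hy⟩))))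
  refine ⟨fun j => (F j).1, fun j hj => (mem_product.1 (hFt j hj)).1, fun b => ?_⟩
  rw [← card_range L]
  refine card_le_card_of_injOn (fun j => (F j).2) (fun j hj => ?_) fun x hx y hy hxy => ?_
  · exact (mem_product.1 (hFt j (mem_filter.1 hj).1)).2
  · obtain ⟨hxJ, hxb⟩ := mem_filter.1 hx
    obtain ⟨hyJ, hyb⟩ := mem_filter.1 hy
    exact hFinj hxJ hyJ (Prod.ext (hxb.trans hyb.symm) hxy)

/-- The divisors of `m` coprime to `j`, which are those that an assignment may give to `j`. -/
def coprimeDivisors (m j : ℕ) : Finset ℕ := {d ∈ m.divisors | j.Coprime d}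

theorem coprimeDivisors_subset (m j : ℕ) : coprimeDivisors m j ⊆ m.divisors :=
  filter_subset _ _

theorem coprimeDivisors_of_coprime {m j : ℕ} (h : j.Coprime m) :
    coprimeDivisors m j = m.divisors :=
  filter_true_of_mem fun _ hd => h.of_dvd_right (Nat.dvd_of_mem_divisors hd)

/-- The map `g` gives every `j ∈ J` a divisor of `m` coprime to `j`, and each divisor has capacity
`L`. A matching of `n` is the inverse of such an assignment with `J = {1, ..., τ(n)}`, `m = n` and
`L = 1`. -/
structure IsCoprimeAssignment (J : Finset ℕ) (m L : ℕ) (g : ℕ → ℕ) : Prop where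
  dvd : ∀ j ∈ J, g j ∣ m
  coprime : ∀ j ∈ J, j.Coprime (g j)
  card_fiber_le : ∀ d, #{j ∈ J | g j = d} ≤ L

theorem exists_isCoprimeAssignment_of_hall {J : Finset ℕ} {m L : ℕ}
    (h : ∀ A ⊆ J, #A ≤ #(A.biUnion (coprimeDivisors m)) * L) :
    ∃ g, IsCoprimeAssignment J m L g := by
  obtain ⟨g, hg, hL⟩ := exists_card_fiber_le_of_hall h
  exact ⟨g, fun j hj => Nat.dvd_of_mem_divisors (mem_filter.1 (hg j hj)).1,
    fun j hj => (mem_filter.1 (hg j hj)).2, hL⟩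

theorem gcd_mul_eq_of_coprime_of_dvd {a b d e : ℕ} (hab : a.Coprime b) (hd : d ∣ a) (he : e ∣ b) :
    (d * e).gcd a = d ∧ (d * e).gcd b = e := by
  constructor
  · rw [Nat.Coprime.gcd_mul_right_cancel d (hab.symm.of_dvd_left he), Nat.gcd_eq_left hd]
  · rw [Nat.Coprime.gcd_mul_left_cancel e (hab.of_dvd_left hd), Nat.gcd_eq_left he]

theorem eq_and_eq_of_mul_eq_mul_of_coprime {a b d d' e e' : ℕ} (hab : a.Coprime b) (hd : d ∣ a)
    (hd' : d' ∣ a) (he : e ∣ b) (he' : e' ∣ b) (h : d * e = d' * e') : d = d' ∧ e = e' := by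
  obtain ⟨h₁, h₂⟩ := gcd_mul_eq_of_coprime_of_dvd hab hd he
  obtain ⟨h₁', h₂'⟩ := gcd_mul_eq_of_coprime_of_dvd hab hd' he'
  rw [h] at h₁ h₂
  exact ⟨h₁.symm.trans h₁', h₂.symm.trans h₂'⟩

namespace IsCoprimeAssignment

theorem mono {J J' : Finset ℕ} {m L : ℕ} {g : ℕ → ℕ} (hg : IsCoprimeAssignment J m L g)
    (h : J' ⊆ J) : IsCoprimeAssignment J' m L g where
  dvd j hj := hg.dvd j (h hj)
  coprime j hj := hg.coprime j (h hj)
  card_fiber_le d := (card_le_card (filter_subset_filter _ h)).trans (hg.card_fiber_le d)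

theorem exists_mul {J : Finset ℕ} {a b L L' : ℕ} (hab : a.Coprime b) {g : ℕ → ℕ}
    (hg : IsCoprimeAssignment J a L' g)
    (hf : ∀ d, ∃ f, IsCoprimeAssignment {j ∈ J | g j = d} b L f) :
    ∃ h, IsCoprimeAssignment J (a * b) L h := by
  choose f hf using hf
  have hmem : ∀ j ∈ J, j ∈ J.filter (g · = g j) := fun j hj => mem_filter.2 ⟨hj, rfl⟩
  have hfb : ∀ j ∈ J, f (g j) j ∣ b := fun j hj => (hf (g j)).dvd j (hmem j hj)
  refine ⟨fun j => g j * f (g j) j, fun j hj => mul_dvd_mul (hg.dvd j hj) (hfb j hj),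
    fun j hj => (hg.coprime j hj).mul_right ((hf (g j)).coprime j (hmem j hj)), fun d => ?_⟩
  obtain hempty | ⟨i, hi⟩ := {j ∈ J | g j * f (g j) j = d}.eq_empty_or_nonempty
  · simp [hempty]
  obtain ⟨hiJ, hid⟩ := mem_filter.1 hi
  refine (card_le_card fun j hj => ?_).trans ((hf (g i)).card_fiber_le (f (g i) i))
  obtain ⟨hjJ, hjd⟩ := mem_filter.1 hj
  obtain ⟨hgj, hfj⟩ := eq_and_eq_of_mul_eq_mul_of_coprime hab (hg.dvd j hjJ) (hg.dvd i hiJ)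
    (hfb j hjJ) (hfb i hiJ) (hjd.trans hid.symm)
  exact mem_filter.2 ⟨mem_filter.2 ⟨hjJ, hgj⟩, hgj ▸ hfj⟩

theorem matchable {n : ℕ} {f : ℕ → ℕ}
    (hf : IsCoprimeAssignment (Icc 1 #n.divisors) n 1 f) : Matchable n := by
  have hmaps : Set.MapsTo f (Icc 1 #n.divisors) n.divisors := fun j hj => by
    have hn : n ≠ 0 := by rintro rfl; simp at hj
    exact Nat.mem_divisors.2 ⟨hf.dvd j hj, hn⟩
  have hinj : Set.InjOn f (Icc 1 #n.divisors) := fun x hx y hy hxy =>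
    card_le_one.1 (hf.card_fiber_le (f y)) x (mem_filter.2 ⟨hx, hxy⟩) y (mem_filter.2 ⟨hy, rfl⟩)
  have hbij : Set.BijOn f (Icc 1 #n.divisors) n.divisors :=
    ⟨hmaps, hinj, surjOn_of_injOn_of_card_le f hmaps hinj (by simp)⟩
  have hinv := hbij.invOn_invFunOn
  have hbij' := hbij.symm hinv.symm
  refine ⟨_, hbij', fun d hd => ?_⟩
  have hcop := hf.coprime _ (hbij'.mapsTo hd)
  rw [hinv.2 hd] at hcop
  exact hcop.symm

end IsCoprimeAssignment

/-! ### Tight numbers and couplings -/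

/-- The map `ρ` sends every integer `x` to a divisor of `m` coprime to `x` that determines `x`
modulo `τ(m)`, and `τ(m) ∣ m`. Each residue class modulo `τ(m)` then has a divisor of its own. -/
structure IsTightMap (m : ℕ) (ρ : ℕ → ℕ) : Prop where
  card_divisors_dvd : #m.divisors ∣ m
  dvd : ∀ x, ρ x ∣ m
  coprime : ∀ x : ℕ, x.Coprime (ρ x)
  modEq : ∀ x y, ρ x = ρ y → x ≡ y [MOD #m.divisors]

theorem isTightMap_one : IsTightMap 1 fun _ => 1 where
  card_divisors_dvd := by simp
  dvd _ := one_dvd _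
  coprime x := x.coprime_one_right
  modEq x y _ := by simp [Nat.modEq_one]

theorem card_divisors_prime_pow {p : ℕ} (hp : p.Prime) (a : ℕ) : #(p ^ a).divisors = a + 1 := by
  rw [Nat.divisors_prime_pow hp, Finset.card_map, card_range]

theorem isTightMap_prime_pow {p : ℕ} (hp : p.Prime) :
    IsTightMap (p ^ (p - 1)) fun x => p ^ (x % p) := by
  have hcard : #(p ^ (p - 1)).divisors = p := by
    rw [card_divisors_prime_pow hp, Nat.sub_add_cancel hp.one_le]
  refine ⟨?_, fun x => pow_dvd_pow p (Nat.le_sub_one_of_lt (x.mod_lt hp.pos)), fun x => ?_,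
    fun x y h => ?_⟩
  · rw [hcard]
    exact dvd_pow_self p (Nat.sub_pos_of_lt hp.one_lt).ne'
  · by_cases h : p ∣ x
    · simp [Nat.mod_eq_zero_of_dvd h]
    · exact ((hp.coprime_iff_not_dvd.2 h).symm).pow_right _
  · rw [hcard]
    exact Nat.pow_right_injective hp.two_le h

theorem IsTightMap.mul {a b : ℕ} {ρ σ : ℕ → ℕ} (hab : a.Coprime b) (hρ : IsTightMap a ρ)
    (hσ : IsTightMap b σ) : IsTightMap (a * b) fun x => ρ x * σ x where
  card_divisors_dvd := by
    rw [hab.card_divisors_mul]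
    exact mul_dvd_mul hρ.card_divisors_dvd hσ.card_divisors_dvd
  dvd x := mul_dvd_mul (hρ.dvd x) (hσ.dvd x)
  coprime x := (hρ.coprime x).mul_right (hσ.coprime x)
  modEq x y h := by
    obtain ⟨hx, hy⟩ := eq_and_eq_of_mul_eq_mul_of_coprime hab (hρ.dvd x) (hρ.dvd y) (hσ.dvd x)
      (hσ.dvd y) h
    rw [hab.card_divisors_mul, ← Nat.modEq_and_modEq_iff_modEq_mul
      (hab.of_dvd hρ.card_divisors_dvd hσ.card_divisors_dvd)]
    exact ⟨hρ.modEq x y hx, hσ.modEq x y hy⟩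

/-- The weights `W x e` form a fractional matching, periodic modulo `m`, between the integers `x`
and the divisors `e` of `m`: they live on coprime pairs, each integer has total weight `1`, and over
one period every divisor receives the same total weight `m / τ(m)`. By `pos`, the integers that are
not coprime to `m` use strictly less than the capacity of each divisor. -/
structure IsCoupling (m : ℕ) (W : ℕ → ℕ → ℝ) : Prop where
  nonneg : ∀ x e, 0 ≤ W x e
  periodic : ∀ x y e, x ≡ y [MOD m] → W x e = W y e
  sum_divisors : ∀ x, ∑ e ∈ m.divisors, W x e = 1
  coprime : ∀ x : ℕ, ∀ e ∈ m.divisors, W x e ≠ 0 → x.Coprime e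
  sum_range : ∀ e ∈ m.divisors, ∑ x ∈ range m, W x e = (m : ℝ) / #m.divisors
  pos : ∀ x : ℕ, ∀ e ∈ m.divisors, x.Coprime m → 0 < W x e

theorem IsCoupling.ne_zero {m : ℕ} {W : ℕ → ℕ → ℝ} (hW : IsCoupling m W) : m ≠ 0 := by
  rintro rfl
  simpa using hW.sum_divisors 0

theorem isCoupling_one : IsCoupling 1 fun _ _ => 1 := by
  constructor <;> simp

theorem sum_range_mul_of_coprime {R : Type*} [CommSemiring R] {a b : ℕ} (ha : a ≠ 0) (hb : b ≠ 0)
    (hab : a.Coprime b) {f g : ℕ → R} (hf : ∀ x y, x ≡ y [MOD a] → f x = f y)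
    (hg : ∀ x y, x ≡ y [MOD b] → g x = g y) :
    ∑ x ∈ range (a * b), f x * g x = (∑ x ∈ range a, f x) * ∑ x ∈ range b, g x := by
  rw [sum_mul_sum, ← sum_product']
  refine sum_bij (fun x _ => (x % a, x % b)) (fun x _ => ?_) (fun x hx y hy h => ?_) ?_
    fun x _ => ?_
  · simp [Nat.mod_lt _ (Nat.pos_of_ne_zero ha), Nat.mod_lt _ (Nat.pos_of_ne_zero hb)]
  · rw [Prod.mk.injEq] at h
    exact ((Nat.modEq_and_modEq_iff_modEq_mul hab).1 h).eq_of_lt_of_lt (mem_range.1 hx)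
      (mem_range.1 hy)
  · rintro ⟨u, v⟩ huv
    obtain ⟨hu, hv⟩ := mem_product.1 huv
    obtain ⟨hzu, hzv⟩ := (Nat.chineseRemainder hab u v).2
    exact ⟨Nat.chineseRemainder hab u v, mem_range.2 (Nat.chineseRemainder_lt_mul hab u v ha hb),
      Prod.ext (Nat.mod_eq_of_modEq hzu (mem_range.1 hu))
        (Nat.mod_eq_of_modEq hzv (mem_range.1 hv))⟩
  · rw [hf x (x % a) (Nat.mod_modEq _ _).symm, hg x (x % b) (Nat.mod_modEq _ _).symm]

theorem sum_divisors_mul_of_coprime {M : Type*} [AddCommMonoid M] {a b : ℕ} (hab : a.Coprime b)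
    (F : ℕ → M) : ∑ e ∈ (a * b).divisors, F e = ∑ d ∈ a.divisors, ∑ e ∈ b.divisors, F (d * e) := by
  rw [← sum_product', Nat.divisors_mul, mul_def, sum_image hab.mul_injOn_divisors]

namespace IsCoupling

variable {a b : ℕ} {W V : ℕ → ℕ → ℝ}

theorem mul (hab : a.Coprime b) (hW : IsCoupling a W) (hV : IsCoupling b V) :
    IsCoupling (a * b) fun x e => W x (e.gcd a) * V x (e.gcd b) := by
  have hgcd : ∀ d ∈ a.divisors, ∀ e ∈ b.divisors, (d * e).gcd a = d ∧ (d * e).gcd b = e :=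
    fun d hd e he => gcd_mul_eq_of_coprime_of_dvd hab (Nat.dvd_of_mem_divisors hd)
      (Nat.dvd_of_mem_divisors he)
  have hsplit : ∀ c ∈ (a * b).divisors, ∃ d ∈ a.divisors, ∃ e ∈ b.divisors, d * e = c :=
    fun c hc => mem_mul.1 (Nat.divisors_mul a b ▸ hc)
  constructor
  case nonneg => exact fun x e => mul_nonneg (hW.nonneg _ _) (hV.nonneg _ _)
  case periodic =>
    intro x y e h
    obtain ⟨ha, hb⟩ := (Nat.modEq_and_modEq_iff_modEq_mul hab).2 h
    rw [hW.periodic x y _ ha, hV.periodic x y _ hb]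
  case sum_divisors =>
    intro x
    have hsum : ∑ c ∈ (a * b).divisors, W x (c.gcd a) * V x (c.gcd b) =
        (∑ d ∈ a.divisors, W x d) * ∑ e ∈ b.divisors, V x e := by
      rw [sum_divisors_mul_of_coprime hab, sum_mul_sum]
      refine sum_congr rfl fun d hd => sum_congr rfl fun e he => ?_
      rw [(hgcd d hd e he).1, (hgcd d hd e he).2]
    rw [hsum, hW.sum_divisors, hV.sum_divisors, one_mul]
  case coprime =>
    intro x c hc h
    obtain ⟨d, hd, e, he, rfl⟩ := hsplit c hc
    rw [(hgcd d hd e he).1, (hgcd d hd e he).2] at h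
    exact (hW.coprime x d hd (left_ne_zero_of_mul h)).mul_right
      (hV.coprime x e he (right_ne_zero_of_mul h))
  case sum_range =>
    intro c hc
    obtain ⟨d, hd, e, he, rfl⟩ := hsplit c hc
    rw [(hgcd d hd e he).1, (hgcd d hd e he).2, sum_range_mul_of_coprime hW.ne_zero hV.ne_zero hab
      (fun x y => hW.periodic x y d) (fun x y => hV.periodic x y e), hW.sum_range d hd,
      hV.sum_range e he, hab.card_divisors_mul, div_mul_div_comm, Nat.cast_mul, Nat.cast_mul]
  case pos =>
    intro x c hc h
    obtain ⟨d, hd, e, he, rfl⟩ := hsplit c hc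
    rw [(hgcd d hd e he).1, (hgcd d hd e he).2]
    exact mul_pos (hW.pos x d hd h.coprime_mul_right_right) (hV.pos x e he h.coprime_mul_left_right)

end IsCoupling

/-- The coupling for `p ^ a` with `a + 1 < p`. Multiples of `p` put all their weight on the divisor
`1`, which is less than its capacity since `1 / p < 1 / (a + 1)`. The remaining integers give each
divisor other than `1` the weight `β` that solves the equation `(1 - 1 / p) * β = 1 / (a + 1)` of
the column sums. -/
noncomputable def primePowCoupling (p a x e : ℕ) : ℝ :=
  let β : ℝ := p / ((a + 1) * (p - 1))
  if p ∣ x then if e = 1 then 1 else 0 else if e = 1 then 1 - a * β else β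

theorem coprime_prime_pow_iff {p a : ℕ} (hp : p.Prime) (ha : a ≠ 0) {x : ℕ} :
    x.Coprime (p ^ a) ↔ ¬ p ∣ x := by
  rw [Nat.coprime_pow_right_iff (Nat.pos_of_ne_zero ha), Nat.coprime_comm, hp.coprime_iff_not_dvd]

theorem sum_range_prime_pow_ite_dvd {p a : ℕ} (hp : p.Prime) (ha : a ≠ 0) (u v : ℝ) :
    ∑ x ∈ range (p ^ a), (if p ∣ x then u else v) = p ^ a * (u / p + (1 - 1 / p) * v) := by
  have hp0 : (p : ℝ) ≠ 0 := mod_cast hp.ne_zero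
  have hcop : (#{x ∈ range (p ^ a) | ¬ p ∣ x} : ℝ) = p ^ a * (1 - 1 / p) := by
    have hfilter : {x ∈ range (p ^ a) | ¬ p ∣ x} = {x ∈ range (p ^ a) | (p ^ a).Coprime x} :=
      filter_congr fun x _ => by rw [Nat.coprime_comm, coprime_prime_pow_iff hp ha]
    rw [hfilter, ← Nat.totient_eq_card_coprime, Nat.totient_prime_pow hp (Nat.pos_of_ne_zero ha),
      Nat.cast_mul, Nat.cast_pow, Nat.cast_sub hp.one_le, Nat.cast_one, ← pow_sub_one_mul ha]
    field_simp
  have hdvd : (#{x ∈ range (p ^ a) | p ∣ x} : ℝ) + #{x ∈ range (p ^ a) | ¬ p ∣ x} = p ^ a := by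
    exact_mod_cast (card_filter_add_card_filter_not (p ∣ ·)).trans (card_range _)
  rw [sum_ite, sum_const, sum_const, nsmul_eq_mul, nsmul_eq_mul, eq_sub_of_add_eq hdvd, hcop]
  ring

theorem isCoupling_primePowCoupling {p a : ℕ} (hp : p.Prime) (ha : a ≠ 0) (hap : a + 1 < p) :
    IsCoupling (p ^ a) (primePowCoupling p a) := by
  have hap' : (a : ℝ) + 1 < p := mod_cast hap
  have ha' : (0 : ℝ) < a := mod_cast Nat.pos_of_ne_zero ha
  have hp' : (0 : ℝ) < p - 1 := by linarith
  have hp0 : (0 : ℝ) < p := by linarith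
  have hβ : 0 < (p : ℝ) / ((a + 1) * (p - 1)) := by positivity
  have hα : 0 < 1 - a * ((p : ℝ) / ((a + 1) * (p - 1))) := by
    rw [sub_pos, ← mul_div_assoc, div_lt_one (by positivity)]
    nlinarith
  constructor
  case nonneg =>
    intro x e
    unfold primePowCoupling
    split_ifs <;> positivity
  case periodic =>
    intro x y e h
    simp only [primePowCoupling, (h.of_dvd (dvd_pow_self p ha)).dvd_iff dvd_rfl]
  case sum_divisors =>
    intro x
    rw [Nat.sum_divisors_prime_pow hp, sum_range_succ']
    by_cases h : p ∣ x <;> simp [primePowCoupling, h, hp.ne_one]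
  case coprime =>
    intro x e he h
    by_cases hx : p ∣ x
    · have he1 : e = 1 := by simpa [primePowCoupling, hx] using h
      exact he1 ▸ x.coprime_one_right
    · exact ((coprime_prime_pow_iff hp ha).2 hx).of_dvd_right (Nat.dvd_of_mem_divisors he)
  case sum_range =>
    intro e _
    unfold primePowCoupling
    rw [sum_range_prime_pow_ite_dvd hp ha, card_divisors_prime_pow hp]
    push_cast
    split_ifs <;> field_simp <;> ring
  case pos =>
    intro x e _ h
    simp only [primePowCoupling, (coprime_prime_pow_iff hp ha).1 h, if_false]
    split_ifs <;> assumption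

/-! ### M-numbers -/

namespace IsMNumber

variable {m n : ℕ}

theorem ne_zero (hn : IsMNumber n) : n ≠ 0 := by
  rintro rfl
  exact hn 2 Nat.prime_two (dvd_zero _)

theorem of_dvd (hn : IsMNumber n) (h : m ∣ n) : IsMNumber m :=
  fun p hp hpm => hn p hp (hpm.trans h)

/-- The prime powers `p ^ (p - 1)` of `m` make up `m₁`, those with smaller exponent make up `m₂`. -/
theorem exists_isTightMap_mul_isCoupling (hm : IsMNumber m) :
    ∃ m₁ m₂ ρ W, m₁ * m₂ = m ∧ m₁.Coprime m₂ ∧ IsTightMap m₁ ρ ∧ IsCoupling m₂ W := by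
  induction m using Nat.recOnPosPrimePosCoprime with
  | zero => exact absurd rfl hm.ne_zero
  | one => exact ⟨1, 1, _, _, rfl, Nat.coprime_one_left 1, isTightMap_one, isCoupling_one⟩
  | prime_pow p a hp ha =>
    have hap : a < p := lt_of_not_ge fun h => hm p hp (pow_dvd_pow p h)
    obtain rfl | h : a = p - 1 ∨ a + 1 < p := by lia
    · exact ⟨_, 1, _, _, mul_one _, Nat.coprime_one_right _, isTightMap_prime_pow hp,
        isCoupling_one⟩
    · exact ⟨1, _, _, _, one_mul _, Nat.coprime_one_left _, isTightMap_one,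
        isCoupling_primePowCoupling hp ha.ne' h⟩
  | coprime a b _ _ hab iha ihb =>
    obtain ⟨a₁, a₂, ρ, W, rfl, ha, hρ, hW⟩ := iha (hm.of_dvd (dvd_mul_right _ _))
    obtain ⟨b₁, b₂, σ, V, rfl, hb, hσ, hV⟩ := ihb (hm.of_dvd (dvd_mul_left _ _))
    obtain ⟨⟨h₁₁, h₂₁⟩, h₁₂, h₂₂⟩ :
        (a₁.Coprime b₁ ∧ a₂.Coprime b₁) ∧ a₁.Coprime b₂ ∧ a₂.Coprime b₂ := by
      simpa only [Nat.coprime_mul_iff_left, Nat.coprime_mul_iff_right] using hab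
    exact ⟨a₁ * b₁, a₂ * b₂, _, _, mul_mul_mul_comm _ _ _ _,
      (ha.mul_right h₁₂).mul_left (h₂₁.symm.mul_right hb), hρ.mul h₁₁ hσ, hW.mul h₂₂ hV⟩

end IsMNumber

/-! ### Assigning divisors of the smooth part -/

theorem card_filter_modEq_Icc {r : ℕ} (hr : r ≠ 0) (q v : ℕ) :
    #{j ∈ Icc 1 (r * q) | j ≡ v [MOD r]} = q := by
  have hr' : (r : ℚ) ≠ 0 := mod_cast hr
  have hend : (((r * q : ℕ) : ℚ) - v) / r = (((0 : ℕ) : ℚ) - v) / r + (q : ℤ) := by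
    push_cast
    field_simp
    ring
  have h := Nat.Ioc_filter_modEq_card 0 (r * q) (Nat.pos_of_ne_zero hr) v
  rw [hend, Int.floor_add_intCast, add_sub_cancel_left, max_eq_left q.cast_nonneg] at h
  exact_mod_cast h

theorem card_filter_modEq_Icc_le {r : ℕ} (hr : r ≠ 0) (k v : ℕ) :
    #{j ∈ Icc 1 k | j ≡ v [MOD r]} ≤ k / r + 1 := by
  rw [← card_filter_modEq_Icc hr (k / r + 1) v]
  exact card_le_card <| filter_subset_filter _ <| Icc_subset_Icc_right
    (Nat.lt_mul_div_succ k (Nat.pos_of_ne_zero hr)).le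

theorem sum_Icc_filter_modEq_le {t m : ℕ} (ht : t ≠ 0) (hm : m ≠ 0) (htm : t.Coprime m)
    {f : ℕ → ℝ} (hf₀ : ∀ x, 0 ≤ f x) (hf : ∀ x y, x ≡ y [MOD m] → f x = f y) (N b : ℕ) :
    ∑ j ∈ Icc 1 (t * N) with j ≡ b [MOD t], f j ≤ ((N : ℝ) / m + 1) * ∑ x ∈ range m, f x := by
  rw [← sum_fiberwise_of_maps_to (g := (· % m)) (t := range m)
    fun j _ => mem_range.2 (Nat.mod_lt _ (Nat.pos_of_ne_zero hm)), mul_sum]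
  refine sum_le_sum fun x _ => ?_
  have hcard : #{j ∈ {j ∈ Icc 1 (t * N) | j ≡ b [MOD t]} | j % m = x} ≤ N / m + 1 := by
    obtain ⟨hct, hcm⟩ := (Nat.chineseRemainder htm b x).2
    refine (card_le_card fun j hj => ?_).trans ((card_filter_modEq_Icc_le (mul_ne_zero ht hm) _
      (Nat.chineseRemainder htm b x)).trans_eq
        (by rw [Nat.mul_div_mul_left _ _ (Nat.pos_of_ne_zero ht)]))
    obtain ⟨hj, hjm⟩ := mem_filter.1 hj
    obtain ⟨hj, hjt⟩ := mem_filter.1 hj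
    exact mem_filter.2 ⟨hj, (Nat.modEq_and_modEq_iff_modEq_mul htm).1
      ⟨hjt.trans hct.symm, (hjm ▸ (Nat.mod_modEq j m).symm).trans hcm.symm⟩⟩
  calc ∑ j ∈ {j ∈ Icc 1 (t * N) | j ≡ b [MOD t]} with j % m = x, f j
      = #{j ∈ {j ∈ Icc 1 (t * N) | j ≡ b [MOD t]} | j % m = x} * f x := by
        rw [← nsmul_eq_mul, ← sum_const]
        exact sum_congr rfl fun j hj =>
          hf j x ((mem_filter.1 hj).2 ▸ (Nat.mod_modEq j m).symm)
    _ ≤ ((N / m + 1 : ℕ) : ℝ) * f x := by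
        gcongr
        exact hf₀ x
    _ ≤ ((N : ℝ) / m + 1) * f x := by
        push_cast
        gcongr
        exacts [hf₀ x, Nat.cast_div_le]

namespace IsCoupling

variable {m : ℕ} {W : ℕ → ℕ → ℝ}

theorem sum_not_coprime_lt (hW : IsCoupling m W) {e : ℕ} (he : e ∈ m.divisors) :
    ∑ x ∈ range m with ¬ x.Coprime m, W x e < (m : ℝ) / #m.divisors := by
  have hcop : (1 % m).Coprime m := by simp [Nat.Coprime, ← Nat.gcd_rec]
  rw [← hW.sum_range e he]
  exact sum_lt_sum_of_subset (filter_subset _ _)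
    (mem_range.2 (Nat.mod_lt 1 (Nat.pos_of_ne_zero hW.ne_zero)))
    (fun h => (mem_filter.1 h).2 hcop) (hW.pos _ e he hcop) fun x _ _ => hW.nonneg x e

/-- For large `L` the strict inequality `sum_not_coprime_lt` absorbs the rounding error. -/
theorem eventually_sum_not_coprime_le (hW : IsCoupling m W) {t : ℕ} (ht : t ≠ 0)
    (htm : t.Coprime m) :
    ∀ᶠ L : ℕ in atTop, ∀ e ∈ m.divisors, ∀ b,
      ∑ j ∈ {j ∈ Icc 1 (t * (#m.divisors * L)) | j ≡ b [MOD t]} with ¬ j.Coprime m, W j e ≤ L := by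
  refine (eventually_all_finset _).2 fun e he => ?_
  have hm : (0 : ℝ) < m := mod_cast Nat.pos_of_ne_zero hW.ne_zero
  have hτ : (0 : ℝ) < #m.divisors := mod_cast card_pos.2 ⟨e, he⟩
  set S := ∑ x ∈ range m with ¬ x.Coprime m, W x e
  have hslack : 0 < 1 - #m.divisors * S / m := by
    rw [sub_pos, div_lt_one hm, ← lt_div_iff₀' hτ]
    exact hW.sum_not_coprime_lt he
  filter_upwards [eventually_ge_atTop ⌈S / (1 - #m.divisors * S / m)⌉₊] with L hL b
  rw [Nat.ceil_le, div_le_iff₀ hslack] at hL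
  calc ∑ j ∈ {j ∈ Icc 1 (t * (#m.divisors * L)) | j ≡ b [MOD t]} with ¬ j.Coprime m, W j e
      ≤ (((#m.divisors * L : ℕ) : ℝ) / m + 1) * S := by
        rw [sum_filter, show S = ∑ x ∈ range m, if ¬ x.Coprime m then W x e else 0 from
          sum_filter _ _]
        refine sum_Icc_filter_modEq_le ht hW.ne_zero htm (fun x => ?_) (fun x y h => ?_) _ b
        · split_ifs <;> [exact le_rfl; exact hW.nonneg x e]
        · simp only [hW.periodic x y e h, Nat.coprime_iff_gcd_eq_one, h.gcd_eq]
    _ = L * (#m.divisors * S / m) + S := by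
        push_cast
        ring
    _ ≤ L := by linarith

theorem card_le_card_biUnion_mul (hW : IsCoupling m W) {A : Finset ℕ} {L : ℕ}
    (hA : ∀ e ∈ m.divisors, ∑ j ∈ A, W j e ≤ L) :
    #A ≤ #(A.biUnion (coprimeDivisors m)) * L := by
  have hsub : A.biUnion (coprimeDivisors m) ⊆ m.divisors :=
    biUnion_subset.2 fun j _ => coprimeDivisors_subset m j
  have hrow : ∀ j ∈ A, ∑ e ∈ A.biUnion (coprimeDivisors m), W j e = 1 := fun j hj => by
    rw [← hW.sum_divisors j]
    refine sum_subset hsub fun e he he' => by_contra fun hne => he' ?_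
    exact mem_biUnion.2 ⟨j, hj, mem_filter.2 ⟨he, hW.coprime j e he hne⟩⟩
  have hreal : (#A : ℝ) ≤ #(A.biUnion (coprimeDivisors m)) * L :=
    calc (#A : ℝ) = ∑ j ∈ A, ∑ e ∈ A.biUnion (coprimeDivisors m), W j e := by
          rw [sum_congr rfl hrow, sum_const, nsmul_one]
      _ = ∑ e ∈ A.biUnion (coprimeDivisors m), ∑ j ∈ A, W j e := sum_comm
      _ ≤ ∑ _e ∈ A.biUnion (coprimeDivisors m), (L : ℝ) := sum_le_sum fun e he => hA e (hsub he)
      _ = #(A.biUnion (coprimeDivisors m)) * L := by rw [sum_const, nsmul_eq_mul]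
  exact_mod_cast hreal

/-- In Hall's condition, a set containing an integer coprime to `m` sees all divisors of `m`, and
for any other set the coupling gives the inequality. -/
theorem eventually_exists_isCoprimeAssignment (hW : IsCoupling m W) {t : ℕ} (ht : t ≠ 0)
    (htm : t.Coprime m) :
    ∀ᶠ L : ℕ in atTop, ∀ b, ∃ g,
      IsCoprimeAssignment {j ∈ Icc 1 (t * (#m.divisors * L)) | j ≡ b [MOD t]} m L g := by
  filter_upwards [hW.eventually_sum_not_coprime_le ht htm] with L hL b
  refine exists_isCoprimeAssignment_of_hall fun A hA => ?_
  by_cases hcop : ∃ j ∈ A, j.Coprime m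
  · obtain ⟨j, hj, hjm⟩ := hcop
    calc #A ≤ #{j ∈ Icc 1 (t * (#m.divisors * L)) | j ≡ b [MOD t]} := card_le_card hA
      _ = #(coprimeDivisors m j) * L := by
          rw [card_filter_modEq_Icc ht, coprimeDivisors_of_coprime hjm]
      _ ≤ #(A.biUnion (coprimeDivisors m)) * L := by
          gcongr
          exact subset_biUnion_of_mem _ hj
  · push Not at hcop
    refine hW.card_le_card_biUnion_mul fun e he => le_trans ?_ (hL e he b)
    exact sum_le_sum_of_subset_of_nonneg (fun j hj => mem_filter.2 ⟨hA hj, hcop j hj⟩)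
      fun j _ _ => hW.nonneg j e

end IsCoupling

theorem IsMNumber.eventually_exists_isCoprimeAssignment {m : ℕ} (hm : IsMNumber m) :
    ∀ᶠ L : ℕ in atTop, ∃ g, IsCoprimeAssignment (Icc 1 (#m.divisors * L)) m L g := by
  obtain ⟨m₁, m₂, ρ, W, rfl, hcop, hρ, hW⟩ := hm.exists_isTightMap_mul_isCoupling
  have ht : #m₁.divisors ≠ 0 := fun h =>
    left_ne_zero_of_mul hm.ne_zero (zero_dvd_iff.1 (h ▸ hρ.card_divisors_dvd))
  filter_upwards [hW.eventually_exists_isCoprimeAssignment ht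
    (hcop.of_dvd_left hρ.card_divisors_dvd)] with L hL
  rw [hcop.card_divisors_mul, mul_assoc]
  refine IsCoprimeAssignment.exists_mul hcop (g := ρ) ⟨fun j _ => hρ.dvd j, fun j _ =>
    hρ.coprime j, fun d => card_filter_le _ _⟩ fun d => ?_
  by_cases hd : ∃ i, ρ i = d
  · obtain ⟨i, rfl⟩ := hd
    obtain ⟨g, hg⟩ := hL i
    exact ⟨g, hg.mono fun j hj => mem_filter.2
      ⟨(mem_filter.1 hj).1, hρ.modEq j i (mem_filter.1 hj).2⟩⟩
  · obtain ⟨g, hg⟩ := hL 0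
    exact ⟨g, hg.mono fun j hj => absurd ⟨j, (mem_filter.1 hj).2⟩ hd⟩

/-! ### Assigning divisors of the rough part -/

section Rough

variable {Q : Finset ℕ}

theorem card_filter_dvd_prime_mul_le (hQ : ∀ p ∈ Q, p.Prime) {p : ℕ} (hp : p.Prime) (i : ℕ) :
    #{q ∈ Q | q ∣ p * i} ≤ #{q ∈ Q | q ∣ i} + 1 := by
  refine (card_le_card fun q hq => ?_).trans (card_insert_le p {q ∈ Q | q ∣ i})
  obtain ⟨hqQ, hqd⟩ := mem_filter.1 hq
  obtain h | h := (hQ q hqQ).dvd_mul.1 hqd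
  · exact mem_insert.2 (.inl ((Nat.prime_dvd_prime_iff_eq (hQ q hqQ) hp).1 h))
  · exact mem_insert_of_mem (mem_filter.2 ⟨hqQ, h⟩)

theorem card_filter_succ_le_card_dvd_le (hQ : ∀ p ∈ Q, p.Prime) (u k : ℕ) :
    #{j ∈ Icc 1 k | u + 1 ≤ #{p ∈ Q | p ∣ j}} ≤
      ∑ p ∈ Q, #{i ∈ Icc 1 (k / p) | u ≤ #{q ∈ Q | q ∣ i}} := by
  have hsub : {j ∈ Icc 1 k | u + 1 ≤ #{p ∈ Q | p ∣ j}} ⊆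
      Q.biUnion fun p => {i ∈ Icc 1 (k / p) | u ≤ #{q ∈ Q | q ∣ i}}.image (p * ·) := by
    intro j hj
    obtain ⟨hjk, hju⟩ := mem_filter.1 hj
    obtain ⟨p, hp⟩ := card_pos.1 (u.succ_pos.trans_le hju)
    obtain ⟨hpQ, i, rfl⟩ := mem_filter.1 hp
    rw [mem_Icc] at hjk
    refine mem_biUnion.2 ⟨p, hpQ, mem_image_of_mem _ (mem_filter.2 ⟨mem_Icc.2 ⟨?_, ?_⟩, ?_⟩)⟩
    · exact Nat.pos_of_mul_pos_left hjk.1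
    · exact (Nat.le_div_iff_mul_le (hQ p hpQ).pos).2 (mul_comm p i ▸ hjk.2)
    · exact Nat.le_of_succ_le_succ (hju.trans (card_filter_dvd_prime_mul_le hQ (hQ p hpQ) i))
  exact (card_le_card hsub).trans (card_biUnion_le.trans (sum_le_sum fun p _ => card_image_le))

theorem card_filter_le_card_dvd_le (hQ : ∀ p ∈ Q, p.Prime) (u k : ℕ) :
    (#{j ∈ Icc 1 k | u ≤ #{p ∈ Q | p ∣ j}} : ℝ) ≤ k * (∑ p ∈ Q, (1 : ℝ) / p) ^ u := by
  induction u generalizing k with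
  | zero => simp
  | succ u ih =>
    calc (#{j ∈ Icc 1 k | u + 1 ≤ #{p ∈ Q | p ∣ j}} : ℝ)
        ≤ ∑ p ∈ Q, (#{i ∈ Icc 1 (k / p) | u ≤ #{q ∈ Q | q ∣ i}} : ℝ) := by
          exact_mod_cast card_filter_succ_le_card_dvd_le hQ u k
      _ ≤ ∑ p ∈ Q, (k : ℝ) / p * (∑ q ∈ Q, (1 : ℝ) / q) ^ u := by
          refine sum_le_sum fun p _ => (ih (k / p)).trans ?_
          gcongr
          exact Nat.cast_div_le
      _ = k * (∑ p ∈ Q, (1 : ℝ) / p) ^ (u + 1) := by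
          simp only [div_eq_mul_one_div (k : ℝ), ← sum_mul, ← mul_sum]
          ring

theorem card_filter_le_card_dvd_le_two_pow (hQ : ∀ p ∈ Q, p.Prime) {k u : ℕ}
    (hδ : 2 * ∑ p ∈ Q, (1 : ℝ) / p ≤ 1) (hk : 2 * k * ∑ p ∈ Q, (1 : ℝ) / p ≤ 2 ^ #Q)
    (hu : u ≠ 0) (huQ : u ≤ #Q) :
    #{j ∈ Icc 1 k | u ≤ #{p ∈ Q | p ∣ j}} ≤ 2 ^ (#Q - u) := by
  have hcard := card_filter_le_card_dvd_le hQ u k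
  set δ := ∑ p ∈ Q, (1 : ℝ) / p
  have : 0 ≤ δ := sum_nonneg fun _ _ => by positivity
  have hpow : 2 ^ u * (k * δ ^ u) ≤ (2 : ℝ) ^ u * 2 ^ (#Q - u) :=
    calc 2 ^ u * (k * δ ^ u) = 2 * k * δ * (2 * δ) ^ (u - 1) := by
          obtain ⟨v, rfl⟩ := Nat.exists_eq_succ_of_ne_zero hu
          rw [Nat.succ_sub_one, pow_succ, pow_succ]
          ring
      _ ≤ 2 ^ #Q * 1 := by
          gcongr
          exact pow_le_one₀ (by positivity) hδ
      _ = 2 ^ u * 2 ^ (#Q - u) := by rw [← pow_add, Nat.add_sub_cancel' huQ, mul_one]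
  exact_mod_cast hcard.trans (le_of_mul_le_mul_left hpow (by positivity))

end Rough

theorem card_divisors_of_squarefree {r : ℕ} (hr : Squarefree r) :
    #r.divisors = 2 ^ #r.primeFactors := by
  rw [Nat.card_divisors hr.ne_zero, ← prod_const]
  refine prod_congr rfl fun p hp => ?_
  rw [Nat.factorization_eq_one_of_squarefree hr (Nat.prime_of_mem_primeFactors hp)
    (Nat.dvd_of_mem_primeFactors hp)]

theorem two_pow_le_card_coprimeDivisors {r : ℕ} (hr : Squarefree r) (j : ℕ) :
    2 ^ (#r.primeFactors - #{p ∈ r.primeFactors | p ∣ j}) ≤ #(coprimeDivisors r j) := by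
  set V := {p ∈ r.primeFactors | ¬ p ∣ j}
  have hV : #r.primeFactors - #{p ∈ r.primeFactors | p ∣ j} = #V :=
    Nat.sub_eq_of_eq_add' (card_filter_add_card_filter_not _).symm
  have hprime : ∀ X ∈ V.powerset, ∀ p ∈ X, p.Prime := fun X hX p hp =>
    Nat.prime_of_mem_primeFactors (filter_subset _ _ (mem_powerset.1 hX hp))
  rw [hV, ← card_powerset]
  refine card_le_card_of_injOn (fun X => ∏ p ∈ X, p) (fun X hX => ?_) fun X hX Y hY hXY => ?_
  · refine mem_filter.2 ⟨Nat.mem_divisors.2 ⟨?_, hr.ne_zero⟩, Nat.Coprime.prod_right fun p hp => ?_⟩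
    · rw [← Nat.prod_primeFactors_of_squarefree hr]
      exact prod_dvd_prod_of_subset _ _ _ ((mem_powerset.1 hX).trans (filter_subset _ _))
    · exact ((hprime X hX p hp).coprime_iff_not_dvd.2
        (mem_filter.1 (mem_powerset.1 hX hp)).2).symm
  · rw [← Nat.primeFactors_prod (hprime X hX), ← Nat.primeFactors_prod (hprime Y hY)]
    exact congrArg _ hXY

/-- In Hall's condition, the member of `A` divisible by the fewest primes of `r` alone already has
`#A` coprime divisors. -/
theorem exists_isCoprimeAssignment_of_squarefree {r k : ℕ} {J : Finset ℕ} (hr : Squarefree r)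
    (hJk : J ⊆ Icc 1 k) (hJ : #J ≤ #r.divisors) (hδ : 2 * ∑ p ∈ r.primeFactors, (1 : ℝ) / p ≤ 1)
    (hk : 2 * k * ∑ p ∈ r.primeFactors, (1 : ℝ) / p ≤ #r.divisors) :
    ∃ f, IsCoprimeAssignment J r 1 f := by
  rw [card_divisors_of_squarefree hr] at hJ hk
  push_cast at hk
  refine exists_isCoprimeAssignment_of_hall fun A hA => ?_
  obtain rfl | hne := A.eq_empty_or_nonempty
  · simp
  obtain ⟨j, hj, hmin⟩ := exists_min_image A (fun j => #{p ∈ r.primeFactors | p ∣ j}) hne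
  have hcard : #A ≤ 2 ^ (#r.primeFactors - #{p ∈ r.primeFactors | p ∣ j}) := by
    by_cases h₀ : #{p ∈ r.primeFactors | p ∣ j} = 0
    · rw [h₀, Nat.sub_zero]
      exact (card_le_card hA).trans hJ
    · refine (card_le_card fun i hi => mem_filter.2 ⟨hJk (hA hi), hmin i hi⟩).trans ?_
      exact card_filter_le_card_dvd_le_two_pow (fun p => Nat.prime_of_mem_primeFactors) hδ hk h₀
        (card_filter_le _ _)
  rw [mul_one]
  exact hcard.trans <| (two_pow_le_card_coprimeDivisors hr j).trans <| card_le_card <|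
    subset_biUnion_of_mem _ hj

theorem IsCoprimeAssignment.matchable_mul {m r : ℕ} {g : ℕ → ℕ} (hm : m ≠ 0) (hr : Squarefree r)
    (hmr : m.Coprime r) (hδ : 2 * (#m.divisors * ∑ p ∈ r.primeFactors, (1 : ℝ) / p) ≤ 1)
    (hg : IsCoprimeAssignment (Icc 1 (#m.divisors * #r.divisors)) m #r.divisors g) :
    Matchable (m * r) := by
  have hδ₀ : 0 ≤ ∑ p ∈ r.primeFactors, (1 : ℝ) / p := sum_nonneg fun _ _ => by positivity
  have hτ : (1 : ℝ) ≤ #m.divisors := mod_cast card_pos.2 ⟨1, Nat.one_mem_divisors.2 hm⟩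
  obtain ⟨f, hf⟩ := hg.exists_mul hmr (L := 1) fun d =>
    exists_isCoprimeAssignment_of_squarefree hr (filter_subset _ _) (hg.card_fiber_le d)
      (by nlinarith) <|
      calc 2 * ((#m.divisors * #r.divisors : ℕ) : ℝ) * ∑ p ∈ r.primeFactors, (1 : ℝ) / p
          = #r.divisors * (2 * (#m.divisors * ∑ p ∈ r.primeFactors, (1 : ℝ) / p)) := by
            push_cast
            ring
        _ ≤ #r.divisors := mul_le_of_le_one_right (Nat.cast_nonneg _) hδ
  rw [← hmr.card_divisors_mul] at hf
  exact hf.matchable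

/-! ### Upper density -/

open Classical in
/-- The upper asymptotic density of `S`, the limit superior of `#{n ∈ S | 1 ≤ n ≤ x} / x` as
`x → ∞`, is at most `c`; the denominator is cleared. -/
def UpperDensityLE (S : Set ℕ) (c : ℝ) : Prop :=
  ∀ c' > c, ∀ᶠ x : ℕ in atTop, (#{n ∈ Icc 1 x | n ∈ S} : ℝ) ≤ c' * x

namespace UpperDensityLE

variable {S T : Set ℕ} {a b c : ℝ}

open Classical in
theorem mono (h : UpperDensityLE T b) (hST : ∀ n ≠ 0, n ∈ S → n ∈ T) (hbc : b ≤ c) :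
    UpperDensityLE S c := fun c' hc' => by
  filter_upwards [h c' (hbc.trans_lt hc')] with x hx
  refine le_trans (Nat.cast_le.2 (card_le_card fun n hn => ?_)) hx
  obtain ⟨hnx, hnS⟩ := mem_filter.1 hn
  exact mem_filter.2 ⟨hnx, hST n (Nat.one_le_iff_ne_zero.1 (mem_Icc.1 hnx).1) hnS⟩

open Classical in
theorem union (hS : UpperDensityLE S a) (hT : UpperDensityLE T b) :
    UpperDensityLE (S ∪ T) (a + b) := fun c hc => by
  have hε : 0 < (c - (a + b)) / 2 := half_pos (sub_pos.2 hc)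
  filter_upwards [hS _ (lt_add_of_pos_right a hε), hT _ (lt_add_of_pos_right b hε)] with x hSx hTx
  calc _ ≤ (#{n ∈ Icc 1 x | n ∈ S} + #{n ∈ Icc 1 x | n ∈ T} : ℝ) := by
        rw [← Nat.cast_add, Nat.cast_le]
        refine (card_le_card fun n hn => ?_).trans (card_union_le _ _)
        simpa only [mem_union, mem_filter, ← and_or_left, Set.mem_union] using hn
    _ ≤ (a + (c - (a + b)) / 2) * x + (b + (c - (a + b)) / 2) * x := add_le_add hSx hTx
    _ = c * x := by ring

theorem of_card_le [DecidablePred (· ∈ S)] {C : ℝ}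
    (h : ∀ x : ℕ, (#{n ∈ Icc 1 x | n ∈ S} : ℝ) ≤ c * x + C) :
    UpperDensityLE S c := fun c' hc' => by
  filter_upwards [eventually_ge_atTop ⌈C / (c' - c)⌉₊] with x hx
  rw [Nat.ceil_le, div_le_iff₀ (sub_pos.2 hc')] at hx
  calc _ = (#{n ∈ Icc 1 x | n ∈ S} : ℝ) := by congr
    _ ≤ c * x + C := h x
    _ ≤ c' * x := by linarith

/-- Markov's inequality. -/
theorem of_sum_le {F : ℕ → ℝ} {η : ℝ} (hF : ∀ n, 0 ≤ F n) (hη : 0 < η)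
    (h : ∀ x : ℕ, ∑ n ∈ Icc 1 x, F n ≤ c * x) : UpperDensityLE {n | η ≤ F n} (c / η) := by
  refine of_card_le (C := 0) fun x => ?_
  rw [add_zero, div_mul_eq_mul_div, le_div_iff₀ hη]
  calc (#{n ∈ Icc 1 x | n ∈ {n | η ≤ F n}} : ℝ) * η
      ≤ ∑ n ∈ Icc 1 x with n ∈ {n | η ≤ F n}, F n := by
        rw [← nsmul_eq_mul]
        exact card_nsmul_le_sum _ _ _ fun n hn => (mem_filter.1 hn).2
    _ ≤ ∑ n ∈ Icc 1 x, F n := sum_le_sum_of_subset_of_nonneg (filter_subset _ _) fun n _ _ => hF n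
    _ ≤ c * x := h x

theorem of_tendsto {ι : Type*} {l : Filter ι} [l.NeBot] {b : ι → ℝ}
    (h : ∀ᶠ i in l, UpperDensityLE S (b i)) (hb : Tendsto b l (𝓝 c)) : UpperDensityLE S c :=
  fun c' hc' =>
    let ⟨_, hi, hlt⟩ := (h.and (hb.eventually_lt_const hc')).exists
    hi c' hlt

theorem tendsto_zero {p : ℕ → Prop} [DecidablePred p] (h : UpperDensityLE {n | p n} 0) :
    Tendsto (fun x : ℕ => (#{n ∈ Icc 1 x | p n} : ℝ) / x) atTop (𝓝 0) := by
  refine tendsto_order.2 ⟨fun c hc => .of_forall fun x => hc.trans_le (by positivity),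
    fun c hc => ?_⟩
  filter_upwards [h (c / 2) (half_pos hc), eventually_gt_atTop 0] with x hx hx₀
  rw [div_lt_iff₀ (Nat.cast_pos.2 hx₀)]
  calc (#{n ∈ Icc 1 x | p n} : ℝ) ≤ c / 2 * x := by convert hx
    _ < c * x := by
      gcongr
      exact half_lt_self hc

end UpperDensityLE

/-! ### Mean values -/

/-- The divisors of `n` all of whose prime factors are less than `N`. -/
def smoothDivisors (N n : ℕ) : Finset ℕ := {d ∈ n.divisors | d ∈ N.smoothNumbers}

/-- The prime factors of `n` that are at least `N`. -/
def roughPrimes (N n : ℕ) : Finset ℕ := {p ∈ n.primeFactors | N ≤ p}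

theorem sum_Icc_sum_filter_dvd_le {ι : Type*} (I : Finset ι) (φ : ι → ℕ) {w : ι → ℝ}
    (hw : ∀ i ∈ I, 0 ≤ w i) (x : ℕ) :
    ∑ n ∈ Icc 1 x, ∑ i ∈ I with φ i ∣ n, w i ≤ x * ∑ i ∈ I, w i / φ i :=
  calc ∑ n ∈ Icc 1 x, ∑ i ∈ I with φ i ∣ n, w i
      = ∑ i ∈ I, #{n ∈ Icc 1 x | φ i ∣ n} * w i := by
        simp only [sum_filter]
        rw [sum_comm]
        simp only [← sum_filter, sum_const, nsmul_eq_mul]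
    _ ≤ ∑ i ∈ I, x * (w i / φ i) := sum_le_sum fun i hi => by
        rw [show #{n ∈ Icc 1 x | φ i ∣ n} = x / φ i from Nat.Ioc_filter_dvd_card_eq_div x (φ i),
          mul_div_left_comm, mul_comm]
        exact mul_le_mul_of_nonneg_left Nat.cast_div_le (hw i hi)
    _ = x * ∑ i ∈ I, w i / φ i := (mul_sum _ _ _).symm

theorem sum_Icc_one_div_sq_le {N : ℕ} (hN : N ≠ 0) (x : ℕ) :
    ∑ p ∈ Icc N x, (1 : ℝ) / (p : ℝ) ^ 2 ≤ 2 / N := by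
  obtain ⟨k, rfl⟩ := Nat.exists_eq_succ_of_ne_zero hN
  have hIcc : Icc (k + 1) x = Ioo k (x + 1) := by
    ext
    simp only [mem_Icc, mem_Ioo]
    lia
  simpa only [hIcc, one_div, Nat.cast_succ] using sum_Ioo_inv_sq_le (α := ℝ) k (x + 1)

theorem roughPrimes_subset_Icc {N n x : ℕ} (hn : n ∈ Icc 1 x) : roughPrimes N n ⊆ Icc N x :=
  fun p hp => by
    obtain ⟨hpn, hNp⟩ := mem_filter.1 hp
    exact mem_Icc.2 ⟨hNp, (Nat.le_of_mem_primeFactors hpn).trans (mem_Icc.1 hn).2⟩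

theorem upperDensityLE_exists_sq_dvd {N : ℕ} (hN : N ≠ 0) :
    UpperDensityLE {n | ∃ p ∈ roughPrimes N n, p ^ 2 ∣ n} (2 / N) := by
  have hmean : ∀ x : ℕ, ∑ n ∈ Icc 1 x, (#{p ∈ roughPrimes N n | p ^ 2 ∣ n} : ℝ) ≤ 2 / N * x :=
    fun x =>
    calc ∑ n ∈ Icc 1 x, (#{p ∈ roughPrimes N n | p ^ 2 ∣ n} : ℝ)
        ≤ ∑ n ∈ Icc 1 x, ∑ p ∈ Icc N x with p ^ 2 ∣ n, (1 : ℝ) := sum_le_sum fun n hn => by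
          rw [sum_const, nsmul_one]
          exact_mod_cast card_le_card (filter_subset_filter _ (roughPrimes_subset_Icc hn))
      _ ≤ x * ∑ p ∈ Icc N x, (1 : ℝ) / (p ^ 2 : ℕ) :=
          sum_Icc_sum_filter_dvd_le _ (· ^ 2) (fun _ _ => zero_le_one) x
      _ ≤ 2 / N * x := by
          rw [mul_comm]
          gcongr
          simpa only [Nat.cast_pow] using sum_Icc_one_div_sq_le hN x
  refine (UpperDensityLE.of_sum_le (fun _ => Nat.cast_nonneg _) one_pos hmean).mono
    (fun n _ ⟨p, hp, hpn⟩ => ?_) (div_one _).le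
  have hcard : 0 < #{p ∈ roughPrimes N n | p ^ 2 ∣ n} := card_pos.2 ⟨p, mem_filter.2 ⟨hp, hpn⟩⟩
  exact (Nat.one_le_cast (α := ℝ)).2 hcard

theorem sum_one_div_le_prod_primesBelow {N : ℕ} {S : Finset ℕ} (hS : ∀ d ∈ S, d ∈ N.smoothNumbers) :
    ∑ d ∈ S, (1 : ℝ) / d ≤ ∏ p ∈ N.primesBelow, (1 - (p : ℝ)⁻¹)⁻¹ := by
  let inv : ℕ →* ℝ := ⟨⟨fun n => (n : ℝ)⁻¹, by simp⟩, fun a b => by simp [mul_comm]⟩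
  have hinv : ∀ {p : ℕ}, p.Prime → ‖inv p‖ < 1 := fun {p} hp => by
    simpa [inv] using inv_lt_one_of_one_lt₀ (Nat.one_lt_cast.2 hp.one_lt)
  have hsum := (EulerProduct.summable_and_hasSum_smoothNumbers_prod_primesBelow_geometric hinv N).2
  calc ∑ d ∈ S, (1 : ℝ) / d
      = ∑ d ∈ S.subtype (· ∈ N.smoothNumbers), inv d := by
        simp only [one_div]
        exact (sum_subtype_of_mem _ hS).symm
    _ ≤ ∏ p ∈ N.primesBelow, (1 - (p : ℝ)⁻¹)⁻¹ :=
        sum_le_hasSum _ (fun d _ => inv_nonneg.2 d.1.cast_nonneg) hsum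

theorem sq_inv_one_sub_inv_le {q : ℝ} (hq : 2 < q) : ((1 - q⁻¹)⁻¹) ^ 2 ≤ q / (q - 2) := by
  have hq₂ : 0 < q - 2 := sub_pos.2 hq
  have hq₁ : 0 < q - 1 := by linarith
  rw [show (1 - q⁻¹)⁻¹ = q / (q - 1) by field_simp, div_pow, div_le_div_iff₀ (by positivity) hq₂]
  nlinarith

/-- By `sq_inv_one_sub_inv_le`, the square of the product telescopes over the odd numbers. -/
theorem prod_primesBelow_sq_le (i : ℕ) :
    (∏ p ∈ (2 * i + 2).primesBelow, (1 - (p : ℝ)⁻¹)⁻¹) ^ 2 ≤ 4 * (2 * i + 1) := by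
  induction i with
  | zero => simp [show Nat.primesBelow 2 = ∅ by decide]
  | succ i ih =>
    obtain rfl | hi := Nat.eq_zero_or_pos i
    · norm_num [show Nat.primesBelow 4 = {2, 3} by decide]
    have heven : ¬ (2 * i + 2).Prime :=
      Nat.not_prime_of_dvd_of_lt (dvd_add (dvd_mul_right 2 i) dvd_rfl) le_rfl (by lia)
    rw [show 2 * (i + 1) + 2 = 2 * i + 2 + 1 + 1 by ring, Nat.primesBelow_succ,
      Nat.primesBelow_succ (2 * i + 2), if_neg heven]
    split_ifs
    · have hq : (2 : ℝ) < (2 * i + 2 + 1 : ℕ) := by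
        push_cast
        linarith [(Nat.cast_pos (α := ℝ)).2 hi]
      rw [prod_insert (by simp [Nat.mem_primesBelow]), mul_pow]
      calc ((1 - ((2 * i + 2 + 1 : ℕ) : ℝ)⁻¹)⁻¹) ^ 2 *
            (∏ p ∈ (2 * i + 2).primesBelow, (1 - (p : ℝ)⁻¹)⁻¹) ^ 2
          ≤ ((2 * i + 2 + 1 : ℕ) / ((2 * i + 2 + 1 : ℕ) - 2)) * (4 * (2 * i + 1)) :=
            mul_le_mul (sq_inv_one_sub_inv_le hq) ih (by positivity)
              (div_nonneg (Nat.cast_nonneg _) (sub_pos.2 hq).le)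
        _ = 4 * (2 * (i + 1 : ℕ) + 1) := by
            push_cast
            rw [show 2 * (i : ℝ) + 2 + 1 - 2 = 2 * i + 1 by ring]
            field_simp
    · push_cast
      linarith

theorem prod_primesBelow_le_two_mul_sqrt {N : ℕ} (hN : N ≠ 0) :
    ∏ p ∈ N.primesBelow, (1 - (p : ℝ)⁻¹)⁻¹ ≤ 2 * √N := by
  have hfactor : ∀ p : ℕ, p.Prime → 1 ≤ (1 - (p : ℝ)⁻¹)⁻¹ := fun p hp => by
    have hp₁ : (p : ℝ)⁻¹ < 1 := inv_lt_one_of_one_lt₀ (Nat.one_lt_cast.2 hp.one_lt)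
    exact (one_le_inv₀ (sub_pos.2 hp₁)).2 (sub_le_self 1 (inv_nonneg.2 p.cast_nonneg))
  obtain ⟨i, hiN, hNi⟩ : ∃ i, 2 * i + 1 ≤ N ∧ N ≤ 2 * i + 2 := ⟨(N - 1) / 2, by lia, by lia⟩
  have hsub : N.primesBelow ⊆ (2 * i + 2).primesBelow := filter_subset_filter _ (range_mono hNi)
  calc ∏ p ∈ N.primesBelow, (1 - (p : ℝ)⁻¹)⁻¹
      ≤ ∏ p ∈ (2 * i + 2).primesBelow, (1 - (p : ℝ)⁻¹)⁻¹ :=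
        prod_le_prod_of_subset_of_one_le hsub
          (fun p hp => zero_le_one.trans (hfactor p (Nat.prime_of_mem_primesBelow hp)))
          fun p hp _ => hfactor p (Nat.prime_of_mem_primesBelow hp)
    _ ≤ √(4 * (2 * i + 1)) := Real.le_sqrt_of_sq_le (prod_primesBelow_sq_le i)
    _ ≤ √(2 ^ 2 * N) := by
        gcongr
        · norm_num
        · exact_mod_cast hiN
    _ = 2 * √N := by rw [Real.sqrt_mul (by positivity), Real.sqrt_sq zero_le_two]

theorem smoothDivisors_product_roughPrimes_subset {N n x : ℕ} (hn : n ∈ Icc 1 x) :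
    smoothDivisors N n ×ˢ roughPrimes N n ⊆
      {i ∈ {d ∈ Icc 1 x | d ∈ N.smoothNumbers} ×ˢ Icc N x | i.1 * i.2 ∣ n} := by
  rintro ⟨d, p⟩ hdp
  obtain ⟨hd, hp⟩ := mem_product.1 hdp
  obtain ⟨hdn, hdN⟩ := mem_filter.1 hd
  obtain ⟨hpn, hNp⟩ := mem_filter.1 hp
  have hprime := Nat.prime_of_mem_primeFactors hpn
  have hdx : d ∈ Icc 1 x :=
    mem_Icc.2 ⟨Nat.pos_of_mem_divisors hdn, (Nat.divisor_le hdn).trans (mem_Icc.1 hn).2⟩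
  have hcop : d.Coprime p := Nat.coprime_comm.1 <| hprime.coprime_iff_not_dvd.2 fun hpd =>
    (Nat.mem_smoothNumbers'.1 hdN p hprime hpd).not_ge hNp
  exact mem_filter.2 ⟨mem_product.2 ⟨mem_filter.2 ⟨hdx, hdN⟩, roughPrimes_subset_Icc hn hp⟩,
    hcop.mul_dvd_of_dvd_of_dvd (Nat.dvd_of_mem_divisors hdn) (Nat.dvd_of_mem_primeFactors hpn)⟩

theorem sum_card_smoothDivisors_mul_le {N : ℕ} (hN : N ≠ 0) (x : ℕ) :
    ∑ n ∈ Icc 1 x, #(smoothDivisors N n) * ∑ p ∈ roughPrimes N n, (1 : ℝ) / p ≤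
      4 / √N * x :=
  let S := {d ∈ Icc 1 x | d ∈ N.smoothNumbers}
  calc ∑ n ∈ Icc 1 x, #(smoothDivisors N n) * ∑ p ∈ roughPrimes N n, (1 : ℝ) / p
      = ∑ n ∈ Icc 1 x, ∑ i ∈ smoothDivisors N n ×ˢ roughPrimes N n, (1 : ℝ) / i.2 := by
        simp only [sum_product, sum_const, nsmul_eq_mul]
    _ ≤ ∑ n ∈ Icc 1 x, ∑ i ∈ S ×ˢ Icc N x with i.1 * i.2 ∣ n, (1 : ℝ) / i.2 :=
        sum_le_sum fun n hn =>
          sum_le_sum_of_subset_of_nonneg (smoothDivisors_product_roughPrimes_subset hn)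
            fun i _ _ => one_div_nonneg.2 i.2.cast_nonneg
    _ ≤ x * ∑ i ∈ S ×ˢ Icc N x, (1 : ℝ) / i.2 / (i.1 * i.2 : ℕ) :=
        sum_Icc_sum_filter_dvd_le (S ×ˢ Icc N x) (fun i => i.1 * i.2)
          (fun i _ => one_div_nonneg.2 i.2.cast_nonneg) x
    _ = x * ((∑ d ∈ S, (1 : ℝ) / d) * ∑ p ∈ Icc N x, (1 : ℝ) / (p : ℝ) ^ 2) := by
        rw [sum_mul_sum, sum_product]
        refine congrArg _ (sum_congr rfl fun d _ => sum_congr rfl fun p _ => ?_)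
        push_cast
        ring
    _ ≤ x * ((2 * √N) * (2 / N)) := by
        gcongr
        · exact (sum_one_div_le_prod_primesBelow fun d hd => (mem_filter.1 hd).2).trans
            (prod_primesBelow_le_two_mul_sqrt hN)
        · exact sum_Icc_one_div_sq_le hN x
    _ = 4 * (√N / N) * x := by ring
    _ = 4 / √N * x := by rw [Real.sqrt_div_self, div_eq_mul_inv]

/-! ### Integers with few rough prime factors -/

theorem exists_le_sum_one_div_primes (N : ℕ) (C : ℝ) :
    ∃ B, C ≤ ∑ p ∈ Ico N B with p.Prime, (1 : ℝ) / p := by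
  have hdiv := (not_summable_iff_tendsto_nat_atTop_of_nonneg
    (Set.indicator_nonneg fun _ _ => by positivity)).1 not_summable_one_div_on_primes
  set f : ℕ → ℝ := Set.indicator {p | p.Prime} fun n => (1 : ℝ) / n
  obtain ⟨B, hNB, hB⟩ := ((eventually_ge_atTop N).and
    (hdiv.eventually_ge_atTop (C + ∑ n ∈ range N, f n))).exists
  refine ⟨B, (le_sub_iff_add_le.2 hB).trans_eq ?_⟩
  rw [← sum_Ico_eq_sub f hNB, sum_filter]
  exact sum_congr rfl fun n _ => Set.indicator_apply _ _ n

theorem totient_prod_primes {Q : Finset ℕ} (hQ : ∀ p ∈ Q, p.Prime) :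
    ((∏ p ∈ Q, p).totient : ℝ) = (∏ p ∈ Q, p : ℕ) * ∏ p ∈ Q, (1 - (p : ℝ)⁻¹) := by
  have h := Nat.totient_eq_mul_prod_factors (∏ p ∈ Q, p)
  rw [Nat.primeFactors_prod hQ] at h
  have hreal := congrArg (Rat.cast : ℚ → ℝ) h
  push_cast at hreal ⊢
  exact hreal

theorem prod_one_sub_inv_le_exp {Q : Finset ℕ} (hQ : ∀ p ∈ Q, p.Prime) :
    ∏ p ∈ Q, (1 - (p : ℝ)⁻¹) ≤ Real.exp (-∑ p ∈ Q, (1 : ℝ) / p) := by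
  rw [← sum_neg_distrib, Real.exp_sum]
  refine prod_le_prod (fun p hp => ?_) fun p _ => ?_
  · exact sub_nonneg.2 (inv_le_one_of_one_le₀ (Nat.one_le_cast.2 (hQ p hp).one_le))
  · rw [one_div]
    exact Real.one_sub_le_exp_neg _

theorem upperDensityLE_forall_not_dvd {Q : Finset ℕ} (hQ : ∀ p ∈ Q, p.Prime) :
    UpperDensityLE {n | ∀ p ∈ Q, ¬ p ∣ n} (Real.exp (-∑ p ∈ Q, (1 : ℝ) / p)) := by
  set M := ∏ p ∈ Q, p
  have hM₀ : M ≠ 0 := prod_ne_zero_iff.2 fun p hp => (hQ p hp).ne_zero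
  set c := Real.exp (-∑ p ∈ Q, (1 : ℝ) / p)
  have hφ : (M.totient : ℝ) ≤ M * c := by
    rw [totient_prod_primes hQ]
    exact mul_le_mul_of_nonneg_left (prod_one_sub_inv_le_exp hQ) M.cast_nonneg
  refine UpperDensityLE.of_card_le (C := c * M) fun x => ?_
  calc (#{n ∈ Icc 1 x | n ∈ {n | ∀ p ∈ Q, ¬ p ∣ n}} : ℝ)
      ≤ #{n ∈ Ico 1 (1 + x) | M.Coprime n} := by
        refine Nat.cast_le.2 (card_le_card fun n hn => ?_)
        obtain ⟨hnx, hnQ⟩ := mem_filter.1 hn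
        refine mem_filter.2 ⟨?_, ?_⟩
        · simpa only [mem_Icc, mem_Ico, Nat.lt_one_add_iff] using hnx
        · exact Nat.Coprime.prod_left fun p hp => (hQ p hp).coprime_iff_not_dvd.2 (hnQ p hp)
    _ ≤ (M.totient * (x / M + 1) : ℕ) := Nat.cast_le.2 (Nat.Ico_filter_coprime_le 1 x hM₀)
    _ ≤ M * c * (x / M + 1) := by
        push_cast
        gcongr
        exact Nat.cast_div_le
    _ = c * x + c * M := by
        have : (M : ℝ) ≠ 0 := Nat.cast_ne_zero.2 hM₀
        field_simp

/-- An integer with a prime factor in `[N, B)` and at least `s` prime factors from `B` on has at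
least `s + 1` from `N` on. -/
theorem upperDensityLE_card_roughPrimes_lt (s : ℕ) :
    ∀ N, UpperDensityLE {n | #(roughPrimes N n) < s} 0 := by
  induction s with
  | zero => exact fun N => .of_card_le (C := 0) fun x => by simp
  | succ s ih =>
    refine fun N => .of_tendsto (.of_forall fun C => ?_) Real.tendsto_exp_neg_atTop_nhds_zero
    obtain ⟨B, hB⟩ := exists_le_sum_one_div_primes N C
    have hfree := upperDensityLE_forall_not_dvd (Q := {p ∈ Ico N B | p.Prime})
      fun p hp => (mem_filter.1 hp).2
    refine (hfree.union (ih B)).mono (fun n hn hlt => ?_)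
      ((add_zero _).trans_le (Real.exp_le_exp.2 (neg_le_neg hB)))
    rw [Set.mem_union, or_iff_not_imp_left]
    simp only [Set.mem_ofPred_eq, mem_filter, mem_Ico, not_forall, not_not]
    rintro ⟨p, ⟨⟨hNp, hpB⟩, hp⟩, hpn⟩
    have hssub : roughPrimes B n ⊂ roughPrimes N n := by
      refine (ssubset_iff_of_subset fun q hq => ?_).2 ⟨p, ?_, fun hpB' => ?_⟩
      · exact mem_filter.2 ⟨(mem_filter.1 hq).1, (hNp.trans hpB.le).trans (mem_filter.1 hq).2⟩
      · exact mem_filter.2 ⟨Nat.mem_primeFactors.2 ⟨hp, hpn, hn⟩, hNp⟩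
      · exact hpB.not_ge (mem_filter.1 hpB').2
    exact (card_lt_card hssub).trans_le (Nat.lt_succ_iff.1 hlt)

/-! ### Typical M-numbers -/

theorem exists_smooth_mul_rough (N : ℕ) {n : ℕ} (hn : n ≠ 0) :
    ∃ m ∈ N.smoothNumbers, ∃ r, (∀ p ∈ r.primeFactors, N ≤ p) ∧ m * r = n := by
  refine ⟨_, Nat.prod_mem_smoothNumbers n N,
    (n.primeFactorsList.filter fun p => !decide (p < N)).prod, fun p hp => ?_, ?_⟩
  · obtain ⟨hp, hpr, -⟩ := Nat.mem_primeFactors.1 hp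
    obtain ⟨q, hq, hpq⟩ := (hp.prime.dvd_prod_iff).1 hpr
    obtain ⟨hqn, hNq⟩ := List.mem_filter.1 hq
    rw [(Nat.prime_dvd_prime_iff_eq hp (Nat.prime_of_mem_primeFactorsList hqn)).1 hpq]
    simpa using hNq
  · rw [← List.prod_append, (List.filter_append_perm _ _).prod_eq, Nat.prod_primeFactorsList hn]

section SmoothMulRough

variable {N m r : ℕ}

theorem coprime_of_mem_smoothNumbers (hm : m ∈ N.smoothNumbers)
    (hr : ∀ p ∈ r.primeFactors, N ≤ p) (hr₀ : r ≠ 0) : m.Coprime r :=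
  Nat.coprime_of_dvd fun p hp hpm hpr =>
    (Nat.mem_smoothNumbers'.1 hm p hp hpm).not_ge (hr p (Nat.mem_primeFactors.2 ⟨hp, hpr, hr₀⟩))

theorem roughPrimes_mul (hm : m ∈ N.smoothNumbers) (hr : ∀ p ∈ r.primeFactors, N ≤ p)
    (hr₀ : r ≠ 0) : roughPrimes N (m * r) = r.primeFactors := by
  have hsmall : {p ∈ m.primeFactors | N ≤ p} = ∅ := filter_false_of_mem fun p hp =>
    (Nat.mem_smoothNumbers'.1 hm p (Nat.prime_of_mem_primeFactors hp)
      (Nat.dvd_of_mem_primeFactors hp)).not_ge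
  rw [roughPrimes, Nat.primeFactors_mul (Nat.ne_zero_of_mem_smoothNumbers hm) hr₀, filter_union,
    hsmall, filter_true_of_mem hr, empty_union]

theorem divisors_subset_smoothDivisors_mul (hm : m ∈ N.smoothNumbers) (hr₀ : r ≠ 0) :
    m.divisors ⊆ smoothDivisors N (m * r) := fun d hd => by
  have hdm := Nat.dvd_of_mem_divisors hd
  exact mem_filter.2 ⟨Nat.mem_divisors.2 ⟨hdm.mul_right r,
    mul_ne_zero (Nat.ne_zero_of_mem_smoothNumbers hm) hr₀⟩, Nat.mem_smoothNumbers_of_dvd hm hdm⟩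

end SmoothMulRough

theorem IsMNumber.dvd_prod_primesBelow {N m : ℕ} (hm : IsMNumber m) (hmN : m ∈ N.smoothNumbers) :
    m ∣ ∏ p ∈ N.primesBelow, p ^ p := by
  rw [← Nat.prod_factorization_pow_eq_self hm.ne_zero, Finsupp.prod, Nat.support_factorization]
  refine (prod_dvd_prod_of_dvd _ (fun p => p ^ p) fun p hp => pow_dvd_pow p ?_).trans
    (prod_dvd_prod_of_subset _ _ _ (Nat.primeFactors_subset_of_mem_smoothNumbers hmN))
  by_contra! hlt
  exact hm p (Nat.prime_of_mem_primeFactors hp)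
    ((pow_dvd_pow p hlt.le).trans (Nat.ordProj_dvd m p))

theorem finite_setOf_isMNumber_smooth (N : ℕ) : {m | IsMNumber m ∧ m ∈ N.smoothNumbers}.Finite :=
  (∏ p ∈ N.primesBelow, p ^ p).divisors.finite_toSet.subset fun _ hm =>
    Nat.mem_divisors.2 ⟨hm.1.dvd_prod_primesBelow hm.2,
      prod_ne_zero_iff.2 fun _ hp => pow_ne_zero _ (Nat.prime_of_mem_primesBelow hp).ne_zero⟩

theorem squarefree_of_forall_sq_not_dvd {r : ℕ} (h : ∀ p ∈ r.primeFactors, ¬ p ^ 2 ∣ r)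
    (hr : r ≠ 0) : Squarefree r :=
  Nat.squarefree_iff_prime_squarefree.2 fun p hp hpr =>
    h p (Nat.mem_primeFactors.2 ⟨hp, (dvd_mul_right p p).trans hpr, hr⟩) (sq p ▸ hpr)

/-- The threshold `s` is uniform because only finitely many M-numbers have all their prime factors
below `N`. -/
theorem exists_forall_matchable_of_le_card_roughPrimes (N : ℕ) : ∃ s, ∀ n, IsMNumber n →
    (∀ p ∈ roughPrimes N n, ¬ p ^ 2 ∣ n) →
    #(smoothDivisors N n) * ∑ p ∈ roughPrimes N n, (1 : ℝ) / p < 1 / 2 →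
    s ≤ #(roughPrimes N n) → Matchable n := by
  obtain ⟨s, hs⟩ := eventually_atTop.1 <|
    (eventually_all_finite (finite_setOf_isMNumber_smooth N)).2 fun m hm =>
      hm.1.eventually_exists_isCoprimeAssignment
  refine ⟨s, fun n hn hsq hsum hcard => ?_⟩
  obtain ⟨m, hm, r, hr, rfl⟩ := exists_smooth_mul_rough N hn.ne_zero
  have hr₀ := right_ne_zero_of_mul hn.ne_zero
  rw [roughPrimes_mul hm hr hr₀] at hsq hsum hcard
  have hr_sq : Squarefree r :=
    squarefree_of_forall_sq_not_dvd (fun p hp hpr => hsq p hp (hpr.mul_left m)) hr₀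
  have hsr : s ≤ #r.divisors := by
    rw [card_divisors_of_squarefree hr_sq]
    exact hcard.trans Nat.lt_two_pow_self.le
  obtain ⟨g, hg⟩ := hs _ hsr m ⟨hn.of_dvd (dvd_mul_right m r), hm⟩
  have hτ : (#m.divisors : ℝ) ≤ #(smoothDivisors N (m * r)) :=
    Nat.cast_le.2 (card_le_card (divisors_subset_smoothDivisors_mul hm hr₀))
  refine hg.matchable_mul (left_ne_zero_of_mul hn.ne_zero) hr_sq
    (coprime_of_mem_smoothNumbers hm hr hr₀) ?_
  have hsum' : #m.divisors * ∑ p ∈ r.primeFactors, (1 : ℝ) / p ≤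
      #(smoothDivisors N (m * r)) * ∑ p ∈ r.primeFactors, (1 : ℝ) / p := by gcongr
  linarith

theorem upperDensityLE_isMNumber_not_matchable {N : ℕ} (hN : N ≠ 0) :
    UpperDensityLE {n | IsMNumber n ∧ ¬ Matchable n} (2 / N + 8 / √N) := by
  obtain ⟨s, hs⟩ := exists_forall_matchable_of_le_card_roughPrimes N
  have hlarge := UpperDensityLE.of_sum_le (fun n => by positivity) (one_half_pos (α := ℝ))
    (sum_card_smoothDivisors_mul_le hN)
  refine (((upperDensityLE_exists_sq_dvd hN).union hlarge).union
    (upperDensityLE_card_roughPrimes_lt s N)).mono (fun n _ ⟨hn, hnot⟩ => ?_) (le_of_eq (by ring))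
  by_contra hmem
  simp only [Set.mem_union, Set.mem_ofPred_eq, not_or, not_exists, not_and, not_le, not_lt] at hmem
  obtain ⟨⟨hsq, hsum⟩, hcard⟩ := hmem
  exact hnot (hs n hn hsq hsum hcard)

open Classical in
theorem stmt_12 :
    Filter.Tendsto
      (fun x : ℕ =>
        (((Finset.Icc 1 x).filter (fun n => IsMNumber n ∧ ¬ Matchable n)).card : ℝ) / (x : ℝ))
      Filter.atTop (nhds 0) := by
  have hN : ∀ᶠ N : ℕ in atTop,
      UpperDensityLE {n | IsMNumber n ∧ ¬ Matchable n} (2 / N + 8 / √N) :=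
    (eventually_ne_atTop 0).mono fun _ => upperDensityLE_isMNumber_not_matchable
  have hlim : Tendsto (fun N : ℕ => 2 / (N : ℝ) + 8 / √N) atTop (𝓝 0) := by
    simpa only [add_zero, Function.comp_def] using (tendsto_const_div_atTop_nhds_zero_nat 2).add
      ((Real.tendsto_sqrt_atTop.comp tendsto_natCast_atTop_atTop).const_div_atTop 8)
  exact (UpperDensityLE.of_tendsto hN hlim).tendsto_zero
end
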